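/- arXiv:1806.11236 — 7 statements merged into one kernel-verified Lean document; each statement's English description precedes it below -/
import Mathlib

section
/- The 2n×2n matrix P is nonnegative, its associated directed graph (edge from i to j iff P_{ji} > 0) is strongly connected and aperiodic (equivalently, P is primitive: some positive power of P has all entries strictly positive), and the spectral radius of P satisfies ρ(P) < 1. -/
/-! The matrix `P` is read as a weighted digraph on two copies of `Fin n`.

Primitivity: the second copy carries the graph of `M`, which is that of `W`, so any two of its
vertices are joined by a walk of length `k` once `W ^ k` is positive
(`Pblock_pow_inr_inr_pos`). Every vertex has an edge into the second copy, and every vertex has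
an edge coming from the second copy (`Pblock_inr_inl_pos` and a positive column entry of `M`), so
all entries of `P ^ (k + 2)` are positive.

Spectral radius: the row sums of `P` are `λ i < 1` on the first copy and `1` on the second
(`Pblock_mulVec_one`). Since each second-copy row puts weight `φ i > 0` on the first copy, all row
sums of `P ^ 2` are below `1`, so `‖P ^ 2‖ < 1` in the operator norm for the sup norm, and
`ρ(P) ≤ ‖P ^ 2‖ ^ (1 / 2)`. -/

open Matrix BigOperators

/-- The diagonal part `W̃` of `W`. -/
noncomputable def diagPart {n : ℕ} (W : Matrix (Fin n) (Fin n) ℝ) :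
    Matrix (Fin n) (Fin n) ℝ :=
  Matrix.diagonal (fun i => W i i)

/-- The off-diagonal part `Ŵ` of `W`. -/
noncomputable def offDiagPart {n : ℕ} (W : Matrix (Fin n) (Fin n) ℝ) :
    Matrix (Fin n) (Fin n) ℝ :=
  W - diagPart W

/-- The `2n × 2n` block matrix
`P = [[Λ(W̃ + ŴΦ), ΛŴ(I − Φ)M], [Φ, (I − Φ)M]]`. -/
noncomputable def Pblock {n : ℕ} (W M : Matrix (Fin n) (Fin n) ℝ)
    (lam phi : Fin n → ℝ) :
    Matrix (Fin n ⊕ Fin n) (Fin n ⊕ Fin n) ℝ :=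
  Matrix.fromBlocks
    (Matrix.diagonal lam * (diagPart W + offDiagPart W * Matrix.diagonal phi))
    (Matrix.diagonal lam * offDiagPart W * (1 - Matrix.diagonal phi) * M)
    (Matrix.diagonal phi)
    ((1 - Matrix.diagonal phi) * M)

/-- Concatenation of walks: positive entries of powers of a nonnegative matrix compose. -/
lemma pow_add_pos_of_pos {ι : Type*} [Fintype ι] [DecidableEq ι] {A : Matrix ι ι ℝ}
    (hA : ∀ i j, 0 ≤ A i j) {a b : ℕ} {i l j : ι}
    (h1 : 0 < (A ^ a) i l) (h2 : 0 < (A ^ b) l j) : 0 < (A ^ (a + b)) i j := by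
  rw [pow_add, Matrix.mul_apply]
  exact Finset.sum_pos' (fun l _ => mul_nonneg (Matrix.pow_apply_nonneg hA a i l)
      (Matrix.pow_apply_nonneg hA b l j))
    ⟨l, Finset.mem_univ l, mul_pos h1 h2⟩

lemma exists_pos_of_sum_mul_pos {ι : Type*} [Fintype ι] {f g : ι → ℝ}
    (hf : ∀ i, 0 ≤ f i) (h : 0 < ∑ i, f i * g i) :
    ∃ i, 0 < f i ∧ 0 < g i := by
  by_contra! hc
  refine absurd h (not_lt.2 (Finset.sum_nonpos fun i _ => ?_))
  rcases (hf i).eq_or_lt with h0 | h0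
  · simp [← h0]
  · exact mul_nonpos_of_nonneg_of_nonpos (hf i) (hc i h0)

/-- A nonnegative matrix whose square has all row sums below `1` has spectral radius below `1`. -/
lemma spectralRadius_lt_one_of_sq {ι : Type*} [Fintype ι] [DecidableEq ι] (A : Matrix ι ι ℝ)
    (hA : ∀ i j, 0 ≤ A i j) (h : ∀ i, (A *ᵥ (A *ᵥ fun _ => (1 : ℝ))) i < 1) :
    spectralRadius ℂ (A.map Complex.ofReal) < 1 := by
  rcases isEmpty_or_nonempty ι with hι | hι
  · have : Subsingleton (Matrix ι ι ℂ) := inferInstance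
    rw [Subsingleton.elim (A.map Complex.ofReal) 0]
    simp
  let : NormedRing (Matrix ι ι ℂ) := Matrix.linftyOpNormedRing
  let : NormedAlgebra ℂ (Matrix ι ι ℂ) := Matrix.linftyOpNormedAlgebra
  have : NormOneClass (Matrix ι ι ℂ) := Matrix.linfty_opNormOneClass
  have : CompleteSpace (Matrix ι ι ℂ) := FiniteDimensional.complete ℂ _
  have hsq : (A.map Complex.ofReal) ^ 2 = (A ^ 2).map Complex.ofReal :=
    (Matrix.map_pow A Complex.ofRealHom 2).symm
  have hnorm : ‖(A.map Complex.ofReal) ^ 2‖₊ < 1 := by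
    rw [hsq, Matrix.linfty_opNNNorm_def, Finset.sup_lt_iff (by simp)]
    intro i _
    rw [← NNReal.coe_lt_coe]
    have hi := h i
    rw [Matrix.mulVec_mulVec, ← pow_two] at hi
    have hnn : ∀ j, 0 ≤ (A ^ 2) i j := Matrix.pow_apply_nonneg hA 2 i
    simpa [Matrix.mulVec, dotProduct, abs_of_nonneg, hnn] using hi
  have hle := spectrum.spectralRadius_le_pow_nnnorm_pow_one_div ℂ (A.map Complex.ofReal) 1
  refine hle.trans_lt ?_
  rw [nnnorm_one, ENNReal.coe_one, ENNReal.one_rpow, mul_one]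
  exact ENNReal.rpow_lt_one (by exact_mod_cast hnorm) (by norm_num)

section

variable {n : ℕ} {W M : Matrix (Fin n) (Fin n) ℝ} {lam phi : Fin n → ℝ}

lemma offDiagPart_nonneg (hW : ∀ i j, 0 ≤ W i j) (i j : Fin n) : 0 ≤ offDiagPart W i j := by
  by_cases h : i = j
  · subst h; simp [offDiagPart, diagPart]
  · simpa [offDiagPart, diagPart, h] using hW i j

lemma offDiagPart_of_ne {i j : Fin n} (h : i ≠ j) : offDiagPart W i j = W i j := by
  simp [offDiagPart, diagPart, h]

lemma Pblock_inr_inl (i j : Fin n) :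
    Pblock W M lam phi (Sum.inr i) (Sum.inl j) = Matrix.diagonal phi i j := rfl

lemma Pblock_inr_inr (i j : Fin n) :
    Pblock W M lam phi (Sum.inr i) (Sum.inr j) = (1 - phi i) * M i j := by
  have : (1 - Matrix.diagonal phi : Matrix (Fin n) (Fin n) ℝ)
      = Matrix.diagonal (fun i => 1 - phi i) := by
    rw [← Matrix.diagonal_one, Matrix.diagonal_sub]
  simp [Pblock, this]

lemma Pblock_inl_inl (i j : Fin n) :
    Pblock W M lam phi (Sum.inl i) (Sum.inl j)
      = lam i * (diagPart W i j + offDiagPart W i j * phi j) := by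
  simp [Pblock]

lemma Pblock_inl_inr (i j : Fin n) :
    Pblock W M lam phi (Sum.inl i) (Sum.inr j)
      = ∑ l, lam i * offDiagPart W i l * (1 - phi l) * M l j := by
  have : (1 - Matrix.diagonal phi : Matrix (Fin n) (Fin n) ℝ)
      = Matrix.diagonal (fun i => 1 - phi i) := by
    rw [← Matrix.diagonal_one, Matrix.diagonal_sub]
  rw [Pblock, Matrix.fromBlocks_apply₁₂, this, Matrix.mul_apply]
  simp

lemma Pblock_nonneg (hW : ∀ i j, 0 ≤ W i j) (hM : ∀ i j, 0 ≤ M i j)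
    (hlam : ∀ i, lam i ∈ Set.Ioo (0 : ℝ) 1) (hphi : ∀ i, phi i ∈ Set.Ioo (0 : ℝ) 1) :
    ∀ i j, 0 ≤ Pblock W M lam phi i j := by
  have hO := offDiagPart_nonneg hW
  have h1 : ∀ i, 0 ≤ 1 - phi i := fun i => sub_nonneg.2 (hphi i).2.le
  rintro (i | i) (j | j)
  · rw [Pblock_inl_inl]
    refine mul_nonneg (hlam i).1.le (add_nonneg ?_ (mul_nonneg (hO i j) (hphi j).1.le))
    rw [diagPart, Matrix.diagonal_apply]
    split_ifs
    exacts [hW i i, le_rfl]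
  · rw [Pblock_inl_inr]
    exact Finset.sum_nonneg fun l _ =>
      mul_nonneg (mul_nonneg (mul_nonneg (hlam i).1.le (hO i l)) (h1 l)) (hM l j)
  · rw [Pblock_inr_inl, Matrix.diagonal_apply]
    split_ifs
    exacts [(hphi i).1.le, le_rfl]
  · rw [Pblock_inr_inr]
    exact mul_nonneg (h1 i) (hM i j)

lemma Pblock_inr_inl_pos (hphi : ∀ i, phi i ∈ Set.Ioo (0 : ℝ) 1) (i : Fin n) :
    0 < Pblock W M lam phi (Sum.inr i) (Sum.inl i) := by
  rw [Pblock_inr_inl, Matrix.diagonal_apply_eq]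
  exact (hphi i).1

lemma Pblock_inr_inr_pos (hphi : ∀ i, phi i ∈ Set.Ioo (0 : ℝ) 1) {i j : Fin n}
    (h : 0 < M i j) : 0 < Pblock W M lam phi (Sum.inr i) (Sum.inr j) := by
  rw [Pblock_inr_inr]
  exact mul_pos (sub_pos.2 (hphi i).2) h

/-- Walks in the graph of `W` lift to walks within the second copy of `Fin n`. -/
lemma Pblock_pow_inr_inr_pos (hW : ∀ i j, 0 ≤ W i j) (hM : ∀ i j, 0 ≤ M i j)
    (hMW : ∀ i j, 0 < M i j ↔ 0 < W i j)
    (hlam : ∀ i, lam i ∈ Set.Ioo (0 : ℝ) 1) (hphi : ∀ i, phi i ∈ Set.Ioo (0 : ℝ) 1)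
    (m : ℕ) :
    ∀ i j, 0 < (W ^ m) i j → 0 < (Pblock W M lam phi ^ m) (Sum.inr i) (Sum.inr j) := by
  induction m with
  | zero =>
    intro i j h
    simpa [Matrix.one_apply] using h
  | succ m ih =>
    intro i j h
    rw [pow_succ, Matrix.mul_apply] at h
    obtain ⟨l, h1, h2⟩ := exists_pos_of_sum_mul_pos (Matrix.pow_apply_nonneg hW m i) h
    refine pow_add_pos_of_pos (Pblock_nonneg hW hM hlam hphi) (ih i l h1) ?_
    rw [pow_one]
    exact Pblock_inr_inr_pos hphi ((hMW l j).2 h2)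

lemma Pblock_mulVec (x y : Fin n → ℝ) :
    Pblock W M lam phi *ᵥ Sum.elim x y
      = Sum.elim
          (fun i => lam i * (W i i * x i
            + (offDiagPart W *ᵥ (fun j => phi j * x j + (1 - phi j) * (M *ᵥ y) j)) i))
          (fun i => phi i * x i + (1 - phi i) * (M *ᵥ y) i) := by
  have hd : (1 - Matrix.diagonal phi : Matrix (Fin n) (Fin n) ℝ)
      = Matrix.diagonal (fun i => 1 - phi i) := by
    rw [← Matrix.diagonal_one, Matrix.diagonal_sub]
  have hv : (fun j => phi j * x j + (1 - phi j) * (M *ᵥ y) j)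
      = Matrix.diagonal phi *ᵥ x + Matrix.diagonal (fun i => 1 - phi i) *ᵥ (M *ᵥ y) := by
    ext j; simp only [Pi.add_apply, Matrix.mulVec_diagonal]
  rw [hv, Pblock, hd, Matrix.fromBlocks_mulVec]
  ext (i | i)
  · simp only [Sum.elim_inl, Sum.elim_comp_inl, Sum.elim_comp_inr, ← Matrix.mulVec_mulVec,
      Pi.add_apply, Matrix.mulVec_diagonal, Matrix.add_mulVec, Matrix.mulVec_add, diagPart]
    ring
  · simp [← Matrix.mulVec_mulVec, Matrix.mulVec_diagonal]

lemma Pblock_mulVec_one (hWrow : ∀ i, ∑ j, W i j = 1) (hMrow : ∀ i, ∑ j, M i j = 1) :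
    Pblock W M lam phi *ᵥ (fun _ => (1 : ℝ)) = Sum.elim lam (fun _ => 1) := by
  have h1 : (fun _ : Fin n ⊕ Fin n => (1 : ℝ)) = Sum.elim (fun _ => 1) (fun _ => 1) := by
    ext (i | i) <;> rfl
  have hM1 : M *ᵥ (fun _ => (1 : ℝ)) = fun _ => 1 := by
    ext i; simpa [Matrix.mulVec, dotProduct] using hMrow i
  have hO : ∀ i, (offDiagPart W *ᵥ (fun _ => (1 : ℝ))) i = 1 - W i i := by
    intro i
    rw [offDiagPart, Matrix.sub_mulVec, diagPart, Pi.sub_apply, Matrix.mulVec_diagonal, mul_one]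
    congr 1
    simpa [Matrix.mulVec, dotProduct] using hWrow i
  rw [h1, Pblock_mulVec, hM1]
  ext (i | i)
  · simp [hO]
  · simp

end

/-- Under the standing assumptions on `W`, `M`, `λ`, `φ`, the
block matrix `P` is nonnegative, primitive (some positive power of `P` is
entrywise positive, equivalently the associated digraph is strongly connected
and aperiodic), and has spectral radius strictly less than `1`. -/
theorem stmt_1 {n : ℕ} (hn : 2 ≤ n) (W M : Matrix (Fin n) (Fin n) ℝ)
    (hWnn : ∀ i j, 0 ≤ W i j) (hWrow : ∀ i, ∑ j, W i j = 1)
    (hWirr : ∀ i j, i ≠ j → Relation.TransGen (fun a b => 0 < W b a) i j)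
    (hWprim : ∃ k : ℕ, 0 < k ∧ ∀ i j, 0 < (W ^ k) i j)
    (hMnn : ∀ i j, 0 ≤ M i j) (hMrow : ∀ i, ∑ j, M i j = 1)
    (hMW : ∀ i j, 0 < M i j ↔ 0 < W i j)
    (lam phi : Fin n → ℝ)
    (hlam : ∀ i, lam i ∈ Set.Ioo (0 : ℝ) 1)
    (hphi : ∀ i, phi i ∈ Set.Ioo (0 : ℝ) 1) :
    (∀ i j, 0 ≤ Pblock W M lam phi i j) ∧
    (∃ k : ℕ, 0 < k ∧ ∀ i j, 0 < ((Pblock W M lam phi) ^ k) i j) ∧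
    spectralRadius ℂ ((Pblock W M lam phi).map Complex.ofReal) < 1 := by
  have hP := Pblock_nonneg hWnn hMnn hlam hphi
  refine ⟨hP, ?_, ?_⟩
  · obtain ⟨k, hk, hkpos⟩ := hWprim
    have hrow : ∀ i, ∃ j, 0 < M i j := by
      intro i
      by_contra! hc
      have := Finset.sum_nonpos fun j (_ : j ∈ Finset.univ) => hc j
      rw [hMrow i] at this
      linarith
    -- Column `j` of `W` is nonzero, as otherwise that of `W ^ k` would vanish.
    have hcol : ∀ j, ∃ i, 0 < M i j := by
      intro j
      obtain ⟨m, rfl⟩ := Nat.exists_eq_succ_of_ne_zero hk.ne'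
      have h := hkpos j j
      rw [Nat.succ_eq_add_one, pow_succ, Matrix.mul_apply] at h
      obtain ⟨l, -, h2⟩ := exists_pos_of_sum_mul_pos (Matrix.pow_apply_nonneg hWnn m j) h
      exact ⟨l, (hMW l j).2 h2⟩
    have hout : ∀ u, ∃ a, 0 < Pblock W M lam phi u (Sum.inr a) := by
      rintro (i | i)
      · -- Irreducibility with `2 ≤ n` gives row `i` of `W` a positive off-diagonal entry.
        have hoff : ∃ j, j ≠ i ∧ 0 < W i j := by
          have : Nontrivial (Fin n) := Fin.nontrivial_iff_two_le.2 hn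
          obtain ⟨i', hi'⟩ := exists_ne i
          by_contra! hc
          have key : ∀ a, Relation.TransGen (fun a b => 0 < W b a) i' a → a ≠ i := by
            intro a ha
            induction ha with
            | single h =>
              rintro rfl
              exact absurd h (not_lt.2 (hc _ hi'))
            | tail _ h ih =>
              rintro rfl
              exact absurd h (not_lt.2 (hc _ ih))
          exact key i (hWirr i' i hi') rfl
        obtain ⟨j, hji, hj⟩ := hoff
        obtain ⟨a, ha⟩ := hrow j
        refine ⟨a, ?_⟩
        rw [Pblock_inl_inr]
        refine Finset.sum_pos' (fun l _ => ?_) ⟨j, Finset.mem_univ j, ?_⟩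
        · exact mul_nonneg (mul_nonneg (mul_nonneg (hlam i).1.le (offDiagPart_nonneg hWnn i l))
            (sub_nonneg.2 (hphi l).2.le)) (hMnn l a)
        · rw [offDiagPart_of_ne hji.symm]
          exact mul_pos (mul_pos (mul_pos (hlam i).1 hj) (sub_pos.2 (hphi j).2)) ha
      · obtain ⟨a, ha⟩ := hrow i
        exact ⟨a, Pblock_inr_inr_pos hphi ha⟩
    have hin : ∀ v, ∃ b, 0 < Pblock W M lam phi (Sum.inr b) v := by
      rintro (j | j)
      · exact ⟨j, Pblock_inr_inl_pos hphi j⟩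
      · obtain ⟨b, hb⟩ := hcol j
        exact ⟨b, Pblock_inr_inr_pos hphi hb⟩
    refine ⟨1 + k + 1, by omega, fun u v => ?_⟩
    obtain ⟨a, ha⟩ := hout u
    obtain ⟨b, hb⟩ := hin v
    rw [← pow_one (Pblock W M lam phi)] at ha hb
    exact pow_add_pos_of_pos hP (pow_add_pos_of_pos hP ha
      (Pblock_pow_inr_inr_pos hWnn hMnn hMW hlam hphi k a b (hkpos a b))) hb
  · refine spectralRadius_lt_one_of_sq _ hP ?_
    have h1 := Pblock_mulVec_one (lam := lam) (phi := phi) hWrow hMrow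
    rw [h1]
    rintro (i | i)
    · -- The row sum of `P ^ 2` is at most that of `P`, which is `λ i`.
      have hle : (Pblock W M lam phi *ᵥ Sum.elim lam (fun _ => 1)) (Sum.inl i)
          ≤ (Pblock W M lam phi *ᵥ (fun _ => (1 : ℝ))) (Sum.inl i) := by
        simp only [Matrix.mulVec, dotProduct]
        refine Finset.sum_le_sum fun v _ => mul_le_mul_of_nonneg_left ?_ (hP _ v)
        rcases v with j | j
        · exact (hlam j).2.le
        · exact le_rfl
      rw [h1] at hle
      exact hle.trans_lt (hlam i).2
    · have hM1 : (M *ᵥ (fun _ => (1 : ℝ))) i = 1 := by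
        simpa [Matrix.mulVec, dotProduct] using hMrow i
      rw [Pblock_mulVec, Sum.elim_inr, hM1]
      nlinarith [mul_pos (hphi i).1 (sub_pos.2 (hlam i).2)]
end

section
/- The matrix I − P_22 is invertible, and the matrix S = (I − P_22)^{-1}Φ is invertible, has all entries strictly positive, is row-stochastic (S·1 = 1), and its inverse is given explicitly by S^{-1} = Φ^{-1} − Φ^{-1}(I − Φ)M. -/
open Matrix BigOperators

/-!
Write `A = I − (I − Φ)M`. Everything rests on a minimum principle: if `A x ≥ 0` entrywise then
`x ≥ 0`. Indeed, at an index `i` where `x` is minimal, `x i ≥ (1 − φ i) ∑ j, M i j * x j ≥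
(1 − φ i) * x i`, because `M` is row-stochastic, and hence `φ i * x i ≥ 0`.

Applied to `x` and `-x`, the principle shows that `A` is injective, hence invertible. Applied to the
columns of `A⁻¹`, it shows that `A⁻¹ ≥ 0`. The `j`-th column `c` satisfies
`c i = δ i j + (1 − φ i) ∑ k, M i k * c k`, so `c j > 0`, and positivity passes from `k` to `i`
whenever `M i k > 0`; strong connectedness spreads it to every index. The row sums of `S` come from
`A 1 = Φ 1`, and the formula for `S⁻¹` is `(A⁻¹ Φ)⁻¹ = Φ⁻¹ A`.
-/

lemma one_sub_mulVec_apply {n : ℕ} (M : Matrix (Fin n) (Fin n) ℝ) (phi x : Fin n → ℝ)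
    (i : Fin n) :
    ((1 - (1 - Matrix.diagonal phi) * M) *ᵥ x) i = x i - (1 - phi i) * ∑ j, M i j * x j := by
  have h : (1 - Matrix.diagonal phi) * M = Matrix.diagonal (fun i => 1 - phi i) * M := by
    rw [← Matrix.diagonal_one, Matrix.diagonal_sub]
  rw [h, Matrix.sub_mulVec, Matrix.one_mulVec, ← Matrix.mulVec_mulVec, Pi.sub_apply,
    Matrix.mulVec_diagonal]
  rfl

/-- Minimum principle for `I − (I − Φ)M`. -/
lemma nonneg_of_mulVec_nonneg {n : ℕ} (M : Matrix (Fin n) (Fin n) ℝ)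
    (hMnn : ∀ i j, 0 ≤ M i j) (hMrow : ∀ i, ∑ j, M i j = 1) (phi : Fin n → ℝ)
    (hphi : ∀ i, phi i ∈ Set.Ioo (0 : ℝ) 1) (x : Fin n → ℝ)
    (hx : ∀ i, 0 ≤ ((1 - (1 - Matrix.diagonal phi) * M) *ᵥ x) i) (k : Fin n) : 0 ≤ x k := by
  have : Nonempty (Fin n) := ⟨k⟩
  obtain ⟨i, hi⟩ := Finite.exists_min x
  have h1 := hx i
  rw [one_sub_mulVec_apply] at h1
  have h2 : x i ≤ ∑ j, M i j * x j := by
    calc x i = ∑ j, M i j * x i := by rw [← Finset.sum_mul, hMrow, one_mul]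
      _ ≤ _ := Finset.sum_le_sum fun j _ => mul_le_mul_of_nonneg_left (hi j) (hMnn i j)
  have h3 := mul_le_mul_of_nonneg_left h2 (sub_nonneg.2 (hphi i).2.le)
  have h4 : 0 ≤ phi i * x i := by linarith
  exact (nonneg_of_mul_nonneg_right h4 (hphi i).1).trans (hi k)

/-- With `P₂₂ = (I − Φ)M`, the matrix `I − P₂₂` is invertible,
and `S = (I − P₂₂)⁻¹ Φ` is invertible, entrywise strictly positive,
row-stochastic (`S·1 = 1`), and `S⁻¹ = Φ⁻¹ − Φ⁻¹(I − Φ)M`. -/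
theorem stmt_3 {n : ℕ} (hn : 2 ≤ n) (W M : Matrix (Fin n) (Fin n) ℝ)
    (hWnn : ∀ i j, 0 ≤ W i j) (hWrow : ∀ i, ∑ j, W i j = 1)
    (hWirr : ∀ i j, i ≠ j → Relation.TransGen (fun a b => 0 < W b a) i j)
    (hWprim : ∃ k : ℕ, 0 < k ∧ ∀ i j, 0 < (W ^ k) i j)
    (hMnn : ∀ i j, 0 ≤ M i j) (hMrow : ∀ i, ∑ j, M i j = 1)
    (hMW : ∀ i j, 0 < M i j ↔ 0 < W i j)
    (lam phi : Fin n → ℝ)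
    (hlam : ∀ i, lam i ∈ Set.Ioo (0 : ℝ) 1)
    (hphi : ∀ i, phi i ∈ Set.Ioo (0 : ℝ) 1) :
    IsUnit (1 - (1 - Matrix.diagonal phi) * M) ∧
    IsUnit ((1 - (1 - Matrix.diagonal phi) * M)⁻¹ * Matrix.diagonal phi) ∧
    (∀ i j, 0 < ((1 - (1 - Matrix.diagonal phi) * M)⁻¹ * Matrix.diagonal phi) i j) ∧
    (((1 - (1 - Matrix.diagonal phi) * M)⁻¹ * Matrix.diagonal phi) *ᵥ
      (fun _ => (1 : ℝ)) = fun _ => (1 : ℝ)) ∧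
    ((1 - (1 - Matrix.diagonal phi) * M)⁻¹ * Matrix.diagonal phi)⁻¹ =
      (Matrix.diagonal phi)⁻¹ -
        (Matrix.diagonal phi)⁻¹ * (1 - Matrix.diagonal phi) * M := by
  set A := 1 - (1 - Matrix.diagonal phi) * M with hA
  have hmin := nonneg_of_mulVec_nonneg M hMnn hMrow phi hphi
  have hAu : IsUnit A := by
    rw [← Matrix.mulVec_injective_iff_isUnit]
    intro x y hxy
    have hxy' : A *ᵥ x = A *ᵥ y := hxy
    funext k
    have h1 := hmin (x - y) (fun i => by rw [← hA, Matrix.mulVec_sub, hxy']; simp) k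
    have h2 := hmin (y - x) (fun i => by rw [← hA, Matrix.mulVec_sub, hxy']; simp) k
    simp only [Pi.sub_apply] at h1 h2
    linarith
  have hAd : IsUnit A.det := (Matrix.isUnit_iff_isUnit_det A).1 hAu
  have hPu : IsUnit (Matrix.diagonal phi) := by
    rw [Matrix.isUnit_diagonal, Pi.isUnit_iff]
    exact fun i => (hphi i).1.ne'.isUnit
  have hPd : IsUnit (Matrix.diagonal phi).det := (Matrix.isUnit_iff_isUnit_det _).1 hPu
  have hpos : ∀ i j, 0 < A⁻¹ i j := by
    intro i j
    have hcol : A *ᵥ (fun k => A⁻¹ k j) = fun k => (1 : Matrix (Fin n) (Fin n) ℝ) k j := by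
      funext k
      rw [← Matrix.mul_nonsing_inv A hAd]
      rfl
    have hone : ∀ a b, 0 ≤ (1 : Matrix (Fin n) (Fin n) ℝ) a b := by
      intro a b
      rw [Matrix.one_apply]
      split_ifs <;> norm_num
    have hc0 : ∀ k, 0 ≤ A⁻¹ k j :=
      hmin (fun k => A⁻¹ k j) (fun k => by rw [← hA, hcol]; exact hone k j)
    have heq : ∀ k, A⁻¹ k j =
        (1 : Matrix (Fin n) (Fin n) ℝ) k j + (1 - phi k) * ∑ l, M k l * A⁻¹ l j := by
      intro k
      have h := congrFun hcol k
      rw [hA, one_sub_mulVec_apply, ← hA] at h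
      linarith
    have hsum : ∀ k l, M k l * A⁻¹ l j ≤ ∑ l, M k l * A⁻¹ l j := fun k l =>
      Finset.single_le_sum (f := fun l => M k l * A⁻¹ l j)
        (fun l _ => mul_nonneg (hMnn k l) (hc0 l)) (Finset.mem_univ l)
    have hjj : 0 < A⁻¹ j j := by
      rw [heq j, Matrix.one_apply_eq]
      have := mul_nonneg (sub_nonneg.2 (hphi j).2.le)
        ((mul_nonneg (hMnn j j) (hc0 j)).trans (hsum j j))
      linarith
    have hstep : ∀ a b, 0 < W b a → 0 < A⁻¹ a j → 0 < A⁻¹ b j := by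
      intro a b hab ha
      rw [heq b]
      have := mul_pos (sub_pos.2 (hphi b).2)
        ((mul_pos ((hMW b a).2 hab) ha).trans_le (hsum b a))
      linarith [hone b j]
    by_cases hij : j = i
    · subst hij
      exact hjj
    · have ht := hWirr j i hij
      clear hij
      induction ht with
      | single h => exact hstep _ _ h hjj
      | tail _ h ih =>
        exact hstep _ _ h ih
  refine ⟨hAu, ((Matrix.isUnit_nonsing_inv_iff).2 hAu).mul hPu, ?_, ?_, ?_⟩
  · intro i j
    rw [Matrix.mul_diagonal]
    exact mul_pos (hpos i j) (hphi j).1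
  · have h1 : Matrix.diagonal phi *ᵥ (fun _ => (1 : ℝ)) = A *ᵥ (fun _ => (1 : ℝ)) := by
      funext i
      rw [hA, one_sub_mulVec_apply, Matrix.mulVec_diagonal]
      simp [hMrow]
    rw [← Matrix.mulVec_mulVec, h1, Matrix.mulVec_mulVec, Matrix.nonsing_inv_mul A hAd,
      Matrix.one_mulVec]
  · rw [Matrix.mul_inv_rev, Matrix.nonsing_inv_nonsing_inv A hAd, hA, mul_sub, mul_one, mul_assoc]
end

section
/- For every initial condition y(0) ∈ ℝ^n, the sequences y(t) and ŷ(t) converge exponentially fast to limits y* and ŷ* respectively (i.e. there exist C > 0 and r ∈ (0,1) with ‖y(t) − y*‖ ≤ C r^t and ‖ŷ(t) − ŷ*‖ ≤ C r^t for all t), where y* = R y(0) and ŷ* = S y*, and where R = (I − P_11 − P_12·S)^{-1}(I − Λ) and S = (I − P_22)^{-1}P_21 are row-stochastic matrices with all entries strictly positive. -/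
/-!
Both `S` and `R` have the form `(1 - A)⁻¹ D`, where `A ≥ 0` has row sums `1 - d i < 1`,
`D = diag d`, and `A i j > 0` whenever `W i j > 0`: take `A = P₂₂`, `d = φ` for `S`, and
`A = P₁₁ + P₁₂ S`, `d = 1 - λ` for `R`. For such `A`, evaluating at the index where `x` is smallest
gives the minimum principle `x ≥ A x → x ≥ 0` (`nonneg_of_mulVec_le`). Hence `1 - A` is invertible
with inverse `N ≥ 0`; the identity `N = 1 + A N` spreads positivity from the diagonal of `N` along
the paths of the strongly connected graph of `W`, and `(1 - A) 1 = d` yields `N D 1 = 1`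
(`resolvent_facts`).

The defining equations of `R` and `S` say that `(R y₀, S R y₀)` is a fixed point of the dynamics.
The error obeys the homogeneous recursion, which is a contraction of the sup norm on pairs: if both
errors are at most `E` and `λ ≤ L < 1`, `φ ≥ p > 0`, then the next private error is at most `L E`,
and the next expressed error at most `(φ i L + (1 - φ i)) E ≤ (1 - p (1 - L)) E`.
-/

open Matrix BigOperators

/-- The block `P₁₁ = Λ(W̃ + ŴΦ)`. -/
noncomputable def P11 {n : ℕ} (W : Matrix (Fin n) (Fin n) ℝ)
    (lam phi : Fin n → ℝ) : Matrix (Fin n) (Fin n) ℝ :=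
  Matrix.diagonal lam * (diagPart W + offDiagPart W * Matrix.diagonal phi)

/-- The block `P₁₂ = ΛŴ(I − Φ)M`. -/
noncomputable def P12 {n : ℕ} (W M : Matrix (Fin n) (Fin n) ℝ)
    (lam phi : Fin n → ℝ) : Matrix (Fin n) (Fin n) ℝ :=
  Matrix.diagonal lam * offDiagPart W * (1 - Matrix.diagonal phi) * M

/-- The block `P₂₂ = (I − Φ)M`. -/
noncomputable def P22 {n : ℕ} (M : Matrix (Fin n) (Fin n) ℝ)
    (phi : Fin n → ℝ) : Matrix (Fin n) (Fin n) ℝ :=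
  (1 - Matrix.diagonal phi) * M

/-- The matrix `S = (I − P₂₂)⁻¹ P₂₁`, where `P₂₁ = Φ`. -/
noncomputable def Smat {n : ℕ} (M : Matrix (Fin n) (Fin n) ℝ)
    (phi : Fin n → ℝ) : Matrix (Fin n) (Fin n) ℝ :=
  (1 - P22 M phi)⁻¹ * Matrix.diagonal phi

/-- The matrix `R = (I − P₁₁ − P₁₂ S)⁻¹ (I − Λ)`. -/
noncomputable def Rmat {n : ℕ} (W M : Matrix (Fin n) (Fin n) ℝ)
    (lam phi : Fin n → ℝ) : Matrix (Fin n) (Fin n) ℝ :=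
  (1 - P11 W lam phi - P12 W M lam phi * Smat M phi)⁻¹ *
    (1 - Matrix.diagonal lam)

/-- The trajectories of the opinion dynamics: `(opinions W M lam phi y0 t).1`
is the vector of private opinions `y(t)` and `(opinions W M lam phi y0 t).2`
is the vector of expressed opinions `ŷ(t)`, with `ŷ(0) = y(0) = y0`,
`y(t+1) = Λ(W̃ y(t) + Ŵ ŷ(t)) + (I − Λ) y(0)` and
`ŷ(t+1) = Φ y(t+1) + (I − Φ) M ŷ(t)`. -/
noncomputable def opinions {n : ℕ} (W M : Matrix (Fin n) (Fin n) ℝ)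
    (lam phi : Fin n → ℝ) (y0 : Fin n → ℝ) :
    ℕ → (Fin n → ℝ) × (Fin n → ℝ)
  | 0 => (y0, y0)
  | t + 1 =>
      let prev := opinions W M lam phi y0 t
      let ynew := Matrix.diagonal lam *ᵥ
          (diagPart W *ᵥ prev.1 + offDiagPart W *ᵥ prev.2) +
          (1 - Matrix.diagonal lam) *ᵥ y0
      (ynew, Matrix.diagonal phi *ᵥ ynew + ((1 - Matrix.diagonal phi) * M) *ᵥ prev.2)

/-- Minimum principle for a nonnegative matrix with row sums less than one. -/
lemma nonneg_of_mulVec_le {n : ℕ} {A : Matrix (Fin n) (Fin n) ℝ} {d x : Fin n → ℝ}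
    (hA : ∀ i j, 0 ≤ A i j) (hrow : ∀ i, ∑ j, A i j = 1 - d i) (hd : ∀ i, 0 < d i)
    (hx : ∀ i, (A *ᵥ x) i ≤ x i) (i : Fin n) : 0 ≤ x i := by
  have : Nonempty (Fin n) := ⟨i⟩
  obtain ⟨m, hm⟩ := Finite.exists_min x
  have h1 : (∑ j, A m j) * x m ≤ (A *ᵥ x) m := by
    rw [Finset.sum_mul]
    exact Finset.sum_le_sum fun j _ => mul_le_mul_of_nonneg_left (hm j) (hA m j)
  rw [hrow] at h1
  have h2 : 0 ≤ d m * x m := by linarith [hx m]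
  exact (nonneg_of_mul_nonneg_right h2 (hd m)).trans (hm i)

/-- `(1 - A)⁻¹ diag(d)` is positive and row-stochastic when `A ≥ 0` has row sums `1 - d i < 1` and
its graph contains that of the irreducible matrix `W`. -/
lemma resolvent_facts {n : ℕ} {W A : Matrix (Fin n) (Fin n) ℝ} {d : Fin n → ℝ}
    (hWirr : ∀ i j, i ≠ j → Relation.TransGen (fun a b => 0 < W b a) i j)
    (hA : ∀ i j, 0 ≤ A i j) (hrow : ∀ i, ∑ j, A i j = 1 - d i) (hd : ∀ i, 0 < d i)
    (hAW : ∀ i j, 0 < W i j → 0 < A i j) :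
    IsUnit (1 - A).det ∧ (∀ i j, 0 < ((1 - A)⁻¹ * Matrix.diagonal d) i j) ∧
      ((1 - A)⁻¹ * Matrix.diagonal d) *ᵥ (fun _ => (1 : ℝ)) = fun _ => (1 : ℝ) := by
  have hinj : Function.Injective (1 - A).mulVec := by
    -- both `u - v` and `v - u` satisfy the minimum principle
    have key : ∀ u v : Fin n → ℝ, (1 - A) *ᵥ u = (1 - A) *ᵥ v → ∀ i, v i ≤ u i := by
      intro u v h i
      have := nonneg_of_mulVec_le (x := u - v) hA hrow hd (fun k => by
        have hk := congrFun h k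
        simp only [Matrix.sub_mulVec, Matrix.one_mulVec, Pi.sub_apply, Matrix.mulVec_sub] at hk ⊢
        linarith) i
      simpa using this
    intro u v h
    exact funext fun i => le_antisymm (key v u h.symm i) (key u v h i)
  have hunit : IsUnit (1 - A) := Matrix.mulVec_injective_iff_isUnit.mp hinj
  have hdet : IsUnit (1 - A).det := (Matrix.isUnit_iff_isUnit_det _).mp hunit
  have hN : (1 - A)⁻¹ = 1 + A * (1 - A)⁻¹ := by
    have h := Matrix.mul_nonsing_inv (1 - A) hdet
    rw [Matrix.sub_mul, Matrix.one_mul] at h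
    exact sub_eq_iff_eq_add.mp h
  have hNe : ∀ i j, (1 - A)⁻¹ i j =
      (1 : Matrix (Fin n) (Fin n) ℝ) i j + ∑ k, A i k * (1 - A)⁻¹ k j := by
    intro i j
    conv_lhs => rw [hN]
    rw [Matrix.add_apply, Matrix.mul_apply]
  have hone : ∀ i j, 0 ≤ (1 : Matrix (Fin n) (Fin n) ℝ) i j := by
    intro i j
    rw [Matrix.one_apply]
    split_ifs <;> norm_num
  have hNnn : ∀ i j, 0 ≤ (1 - A)⁻¹ i j := by
    intro i j
    refine nonneg_of_mulVec_le (x := fun k => (1 - A)⁻¹ k j) hA hrow hd (fun k => ?_) i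
    have h := hNe k j
    have h1 := hone k j
    simp only [Matrix.mulVec, dotProduct]
    linarith
  have hstep : ∀ i k j, A i k * (1 - A)⁻¹ k j ≤ (1 - A)⁻¹ i j := by
    intro i k j
    have h := hNe i j
    have h1 := hone i j
    have h2 := Finset.single_le_sum (f := fun k => A i k * (1 - A)⁻¹ k j)
      (fun l _ => mul_nonneg (hA i l) (hNnn l j)) (Finset.mem_univ k)
    linarith
  have hdiag : ∀ j, 0 < (1 - A)⁻¹ j j := by
    intro j
    have h := hNe j j
    have h2 : 0 ≤ ∑ k, A j k * (1 - A)⁻¹ k j :=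
      Finset.sum_nonneg fun l _ => mul_nonneg (hA j l) (hNnn l j)
    rw [Matrix.one_apply_eq] at h
    linarith
  have hNpos : ∀ i j, 0 < (1 - A)⁻¹ i j := by
    intro i j
    by_cases hij : j = i
    · subst hij; exact hdiag j
    · induction hWirr j i hij with
      | single h => exact (mul_pos (hAW _ _ h) (hdiag j)).trans_le (hstep _ _ _)
      | @tail b c _ h ih =>
        have hb : 0 < (1 - A)⁻¹ b j := by
          by_cases hjb : j = b
          · subst hjb; exact hdiag j
          · exact ih hjb
        exact (mul_pos (hAW _ _ h) hb).trans_le (hstep _ _ _)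
  refine ⟨hdet, fun i j => ?_, ?_⟩
  · rw [Matrix.mul_diagonal]
    exact mul_pos (hNpos i j) (hd j)
  · have h1 : Matrix.diagonal d *ᵥ (fun _ => (1 : ℝ)) = (1 - A) *ᵥ (fun _ => (1 : ℝ)) := by
      funext i
      rw [Matrix.mulVec_diagonal, Matrix.sub_mulVec, Matrix.one_mulVec, Pi.sub_apply]
      simp only [Matrix.mulVec, dotProduct, mul_one, hrow]
      ring
    rw [← Matrix.mulVec_mulVec, h1, Matrix.mulVec_mulVec, Matrix.nonsing_inv_mul _ hdet,
      Matrix.one_mulVec]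

lemma offDiagPart_apply {n : ℕ} (W : Matrix (Fin n) (Fin n) ℝ) (i j : Fin n) :
    offDiagPart W i j = if i = j then 0 else W i j := by
  simp only [offDiagPart, diagPart, Matrix.sub_apply, Matrix.diagonal_apply]
  split_ifs with h
  · subst h; ring
  · ring

lemma one_sub_diagonal {n : ℕ} (f : Fin n → ℝ) :
    (1 : Matrix (Fin n) (Fin n) ℝ) - Matrix.diagonal f = Matrix.diagonal (fun i => 1 - f i) := by
  rw [← Matrix.diagonal_one, Matrix.diagonal_sub]

/-- A nonnegative combination whose weights sum to one stays within a bound on the entries. -/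
lemma abs_mulVec_le {n : ℕ} {A : Matrix (Fin n) (Fin n) ℝ} {x : Fin n → ℝ} {E : ℝ}
    (hA : ∀ i j, 0 ≤ A i j) (hrow : ∀ i, ∑ j, A i j = 1) (hx : ∀ i, |x i| ≤ E) (i : Fin n) :
    |(A *ᵥ x) i| ≤ E := by
  calc |(A *ᵥ x) i| ≤ ∑ j, |A i j * x j| := by
        simp only [Matrix.mulVec, dotProduct]
        exact Finset.abs_sum_le_sum_abs _ _
    _ ≤ ∑ j, A i j * E := Finset.sum_le_sum fun j _ => by
        rw [abs_mul, abs_of_nonneg (hA i j)]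
        exact mul_le_mul_of_nonneg_left (hx j) (hA i j)
    _ = E := by rw [← Finset.sum_mul, hrow, one_mul]

/-- `W̃ x + Ŵ z` averages the entries of `x` and `z` with the weights of a row of `W`. -/
lemma abs_diag_add_offDiag_le {n : ℕ} {W : Matrix (Fin n) (Fin n) ℝ} {x z : Fin n → ℝ} {E : ℝ}
    (hW : ∀ i j, 0 ≤ W i j) (hrow : ∀ i, ∑ j, W i j = 1) (hx : ∀ i, |x i| ≤ E)
    (hz : ∀ i, |z i| ≤ E) (i : Fin n) :
    |(diagPart W *ᵥ x + offDiagPart W *ᵥ z) i| ≤ E := by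
  have h : (diagPart W *ᵥ x + offDiagPart W *ᵥ z) i =
      ∑ j, W i j * (if i = j then x j else z j) := by
    rw [Pi.add_apply]
    simp only [Matrix.mulVec, dotProduct]
    rw [← Finset.sum_add_distrib]
    refine Finset.sum_congr rfl fun j _ => ?_
    rw [offDiagPart_apply, diagPart, Matrix.diagonal_apply]
    split_ifs with hij
    · subst hij; ring
    · ring
  rw [h]
  calc _ ≤ ∑ j, |W i j * (if i = j then x j else z j)| := Finset.abs_sum_le_sum_abs _ _
    _ ≤ ∑ j, W i j * E := Finset.sum_le_sum fun j _ => by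
        rw [abs_mul, abs_of_nonneg (hW i j)]
        refine mul_le_mul_of_nonneg_left ?_ (hW i j)
        split_ifs
        exacts [hx j, hz j]
    _ = E := by rw [← Finset.sum_mul, hrow, one_mul]

/-- For every initial condition `y(0)`, the private and
expressed opinions converge exponentially fast to `y* = R y(0)` and
`ŷ* = S y*` respectively, where `R` and `S` are row-stochastic with strictly
positive entries. -/
theorem stmt_6 {n : ℕ} (hn : 2 ≤ n) (W M : Matrix (Fin n) (Fin n) ℝ)
    (hWnn : ∀ i j, 0 ≤ W i j) (hWrow : ∀ i, ∑ j, W i j = 1)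
    (hWirr : ∀ i j, i ≠ j → Relation.TransGen (fun a b => 0 < W b a) i j)
    (hWprim : ∃ k : ℕ, 0 < k ∧ ∀ i j, 0 < (W ^ k) i j)
    (hMnn : ∀ i j, 0 ≤ M i j) (hMrow : ∀ i, ∑ j, M i j = 1)
    (hMW : ∀ i j, 0 < M i j ↔ 0 < W i j)
    (lam phi : Fin n → ℝ)
    (hlam : ∀ i, lam i ∈ Set.Ioo (0 : ℝ) 1)
    (hphi : ∀ i, phi i ∈ Set.Ioo (0 : ℝ) 1) :
    (∀ i j, 0 < Rmat W M lam phi i j) ∧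
    (Rmat W M lam phi *ᵥ (fun _ => (1 : ℝ)) = fun _ => (1 : ℝ)) ∧
    (∀ i j, 0 < Smat M phi i j) ∧
    (Smat M phi *ᵥ (fun _ => (1 : ℝ)) = fun _ => (1 : ℝ)) ∧
    ∀ y0 : Fin n → ℝ, ∃ C : ℝ, 0 < C ∧ ∃ r : ℝ, r ∈ Set.Ioo (0 : ℝ) 1 ∧
      ∀ t : ℕ,
        ‖(opinions W M lam phi y0 t).1 - Rmat W M lam phi *ᵥ y0‖ ≤ C * r ^ t ∧
        ‖(opinions W M lam phi y0 t).2 -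
            Smat M phi *ᵥ (Rmat W M lam phi *ᵥ y0)‖ ≤ C * r ^ t := by
  have hSfacts : IsUnit (1 - P22 M phi).det ∧ (∀ i j, 0 < Smat M phi i j) ∧
      Smat M phi *ᵥ (fun _ => (1 : ℝ)) = fun _ => (1 : ℝ) := by
    have hP : ∀ i j, P22 M phi i j = (1 - phi i) * M i j := fun i j => by
      rw [P22, one_sub_diagonal, Matrix.diagonal_mul]
    refine resolvent_facts hWirr (fun i j => ?_) (fun i => ?_) (fun i => (hphi i).1)
      (fun i j h => ?_)
    · rw [hP]; exact mul_nonneg (by linarith [(hphi i).2]) (hMnn i j)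
    · simp only [hP]; rw [← Finset.mul_sum, hMrow, mul_one]
    · rw [hP]; exact mul_pos (by linarith [(hphi i).2]) ((hMW i j).2 h)
  obtain ⟨hSdet, hSpos, hSrow⟩ := hSfacts
  have hRfacts : IsUnit (1 - P11 W lam phi - P12 W M lam phi * Smat M phi).det ∧
      (∀ i j, 0 < Rmat W M lam phi i j) ∧
      Rmat W M lam phi *ᵥ (fun _ => (1 : ℝ)) = fun _ => (1 : ℝ) := by
    have hoff : ∀ i j, 0 ≤ offDiagPart W i j := fun i j => by
      rw [offDiagPart_apply]
      split_ifs
      exacts [le_rfl, hWnn i j]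
    have hP11 : ∀ i j, P11 W lam phi i j = lam i * (if i = j then W i j else W i j * phi j) := by
      intro i j
      rw [P11, Matrix.diagonal_mul, Matrix.add_apply, Matrix.mul_diagonal, offDiagPart_apply,
        diagPart, Matrix.diagonal_apply]
      split_ifs with h
      · subst h; ring
      · ring
    have hP12 : ∀ i j, 0 ≤ P12 W M lam phi i j := by
      intro i j
      rw [P12, one_sub_diagonal, Matrix.mul_apply]
      refine Finset.sum_nonneg fun k _ => mul_nonneg ?_ (hMnn k j)
      rw [Matrix.mul_diagonal, Matrix.diagonal_mul]
      exact mul_nonneg (mul_nonneg (hlam i).1.le (hoff i k)) (by linarith [(hphi k).2])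
    have hPS : ∀ i j, 0 ≤ (P12 W M lam phi * Smat M phi) i j := fun i j => by
      rw [Matrix.mul_apply]
      exact Finset.sum_nonneg fun k _ => mul_nonneg (hP12 i k) (hSpos k j).le
    have hQrow : (P11 W lam phi + P12 W M lam phi * Smat M phi) *ᵥ (fun _ => (1 : ℝ)) = lam := by
      have hM1 : M *ᵥ (fun _ => (1 : ℝ)) = fun _ => (1 : ℝ) := by
        funext i
        simp only [Matrix.mulVec, dotProduct, mul_one, hMrow]
      have hW1 : W *ᵥ (fun _ => (1 : ℝ)) = fun _ => (1 : ℝ) := by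
        funext i
        simp only [Matrix.mulVec, dotProduct, mul_one, hWrow]
      have hP12M : P12 W M lam phi *ᵥ (fun _ => (1 : ℝ)) =
          (Matrix.diagonal lam * offDiagPart W * (1 - Matrix.diagonal phi)) *ᵥ
            (fun _ => (1 : ℝ)) := by
        rw [P12, ← Matrix.mulVec_mulVec, hM1]
      have hsum : P11 W lam phi +
          Matrix.diagonal lam * offDiagPart W * (1 - Matrix.diagonal phi) =
          Matrix.diagonal lam * W := by
        rw [P11, offDiagPart]; noncomm_ring
      rw [Matrix.add_mulVec, ← Matrix.mulVec_mulVec, hSrow, hP12M, ← Matrix.add_mulVec, hsum,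
        ← Matrix.mulVec_mulVec, hW1]
      funext i
      rw [Matrix.mulVec_diagonal, mul_one]
    rw [Rmat, sub_sub, one_sub_diagonal]
    refine resolvent_facts hWirr (fun i j => ?_) (fun i => ?_)
      (fun i => by linarith [(hlam i).2]) (fun i j h => ?_)
    · rw [Matrix.add_apply, hP11]
      refine add_nonneg (mul_nonneg (hlam i).1.le ?_) (hPS i j)
      split_ifs
      exacts [hWnn i j, mul_nonneg (hWnn i j) (hphi j).1.le]
    · have h := congrFun hQrow i
      simp only [Matrix.mulVec, dotProduct, mul_one] at h
      rw [h]; ring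
    · rw [Matrix.add_apply, hP11]
      refine add_pos_of_pos_of_nonneg (mul_pos (hlam i).1 ?_) (hPS i j)
      split_ifs
      exacts [h, mul_pos h (hphi j).1]
  obtain ⟨hRdet, hRpos, hRrow⟩ := hRfacts
  refine ⟨hRpos, hRrow, hSpos, hSrow, fun y0 => ?_⟩
  set ys := Rmat W M lam phi *ᵥ y0 with hys
  set zs := Smat M phi *ᵥ ys with hzs
  have hfix2 : zs = Matrix.diagonal phi *ᵥ ys + ((1 - Matrix.diagonal phi) * M) *ᵥ zs := by
    have h : (1 - P22 M phi) *ᵥ zs = Matrix.diagonal phi *ᵥ ys := by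
      rw [hzs, Smat, Matrix.mulVec_mulVec, ← Matrix.mul_assoc, Matrix.mul_nonsing_inv _ hSdet,
        Matrix.one_mul]
    rw [Matrix.sub_mulVec, Matrix.one_mulVec, P22] at h
    rw [← h]; abel
  have hfix1 : ys = Matrix.diagonal lam *ᵥ (diagPart W *ᵥ ys + offDiagPart W *ᵥ zs) +
      (1 - Matrix.diagonal lam) *ᵥ y0 := by
    have h : (1 - P11 W lam phi - P12 W M lam phi * Smat M phi) *ᵥ ys =
        (1 - Matrix.diagonal lam) *ᵥ y0 := by
      rw [hys, Rmat, Matrix.mulVec_mulVec, ← Matrix.mul_assoc, Matrix.mul_nonsing_inv _ hRdet,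
        Matrix.one_mul]
    rw [Matrix.sub_mulVec, Matrix.sub_mulVec, Matrix.one_mulVec, ← Matrix.mulVec_mulVec, ← hzs]
      at h
    have h2 : Matrix.diagonal lam *ᵥ (diagPart W *ᵥ ys + offDiagPart W *ᵥ zs) =
        P11 W lam phi *ᵥ ys + P12 W M lam phi *ᵥ zs := by
      conv_lhs => rw [hfix2]
      simp only [P11, P12, Matrix.mulVec_add, Matrix.mulVec_mulVec, Matrix.mul_add,
        Matrix.add_mulVec, Matrix.mul_assoc, add_assoc]
    rw [← h, h2]; abel
  have : Nonempty (Fin n) := ⟨⟨0, by omega⟩⟩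
  obtain ⟨a, ha⟩ := Finite.exists_max lam
  obtain ⟨b, hb⟩ := Finite.exists_min phi
  have ha0 := hlam a
  have hb0 := hphi b
  have hab : 0 < phi b * (1 - lam a) := mul_pos hb0.1 (by linarith [ha0.2])
  have hr1 : lam a ≤ 1 - phi b * (1 - lam a) := by nlinarith [ha0.2, hb0.2]
  set r := 1 - phi b * (1 - lam a) with hr
  have hr0 : 0 < r := ha0.1.trans_le hr1
  -- adding `1` keeps the constant positive when the initial error vanishes
  set C := ‖y0 - ys‖ + ‖y0 - zs‖ + 1 with hC
  have hCpos : 0 < C := by positivity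
  refine ⟨C, hCpos, r, ⟨hr0, by linarith⟩, ?_⟩
  have main : ∀ t : ℕ, (∀ i, |((opinions W M lam phi y0 t).1 - ys) i| ≤ C * r ^ t) ∧
      (∀ i, |((opinions W M lam phi y0 t).2 - zs) i| ≤ C * r ^ t) := by
    intro t
    induction t with
    | zero =>
      have h1 : ∀ i, |(y0 - ys) i| ≤ ‖y0 - ys‖ := fun i => norm_le_pi_norm (y0 - ys) i
      have h2 : ∀ i, |(y0 - zs) i| ≤ ‖y0 - zs‖ := fun i => norm_le_pi_norm (y0 - zs) i
      have h3 := norm_nonneg (y0 - ys)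
      have h4 := norm_nonneg (y0 - zs)
      simp only [opinions, pow_zero, mul_one]
      exact ⟨fun i => by linarith [h1 i], fun i => by linarith [h2 i]⟩
    | succ t ih =>
      obtain ⟨ih1, ih2⟩ := ih
      set p := opinions W M lam phi y0 t with hp
      set q := opinions W M lam phi y0 (t + 1) with hq
      have hE : 0 ≤ C * r ^ t := by positivity
      have e1 : q.1 - ys = Matrix.diagonal lam *ᵥ
          (diagPart W *ᵥ (p.1 - ys) + offDiagPart W *ᵥ (p.2 - zs)) := by
        have h : q.1 = Matrix.diagonal lam *ᵥ (diagPart W *ᵥ p.1 + offDiagPart W *ᵥ p.2) +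
            (1 - Matrix.diagonal lam) *ᵥ y0 := rfl
        rw [h]
        conv_lhs => rw [hfix1]
        simp only [Matrix.mulVec_add, Matrix.mulVec_sub]
        abel
      have e2 : q.2 - zs = Matrix.diagonal phi *ᵥ (q.1 - ys) +
          Matrix.diagonal (fun i => 1 - phi i) *ᵥ (M *ᵥ (p.2 - zs)) := by
        have h : q.2 = Matrix.diagonal phi *ᵥ q.1 +
            ((1 - Matrix.diagonal phi) * M) *ᵥ p.2 := rfl
        rw [h, ← one_sub_diagonal, Matrix.mulVec_mulVec]
        conv_lhs => rw [hfix2]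
        simp only [Matrix.mulVec_sub]
        abel
      have b1 : ∀ i, |(q.1 - ys) i| ≤ lam a * (C * r ^ t) := by
        intro i
        rw [e1, Matrix.mulVec_diagonal, abs_mul, abs_of_pos (hlam i).1]
        exact mul_le_mul (ha i) (abs_diag_add_offDiag_le hWnn hWrow ih1 ih2 i) (abs_nonneg _)
          ha0.1.le
      have hpow : C * r ^ (t + 1) = r * (C * r ^ t) := by ring
      rw [hpow]
      refine ⟨fun i => (b1 i).trans (mul_le_mul_of_nonneg_right hr1 hE), fun i => ?_⟩
      rw [e2, Pi.add_apply, Matrix.mulVec_diagonal, Matrix.mulVec_diagonal]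
      have hi := hphi i
      have hi' : 0 < 1 - phi i := by linarith [hi.2]
      calc _ ≤ |phi i * (q.1 - ys) i| + |(1 - phi i) * (M *ᵥ (p.2 - zs)) i| := abs_add_le _ _
        _ = phi i * |(q.1 - ys) i| + (1 - phi i) * |(M *ᵥ (p.2 - zs)) i| := by
            rw [abs_mul, abs_mul, abs_of_pos hi.1, abs_of_pos hi']
        _ ≤ phi i * (lam a * (C * r ^ t)) + (1 - phi i) * (C * r ^ t) :=
            add_le_add (mul_le_mul_of_nonneg_left (b1 i) hi.1.le)
              (mul_le_mul_of_nonneg_left (abs_mulVec_le hMnn hMrow ih2 i) hi'.le)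
        _ = (1 - phi i * (1 - lam a)) * (C * r ^ t) := by ring
        _ ≤ r * (C * r ^ t) := by
            refine mul_le_mul_of_nonneg_right ?_ hE
            have := mul_le_mul_of_nonneg_right (hb i) (by linarith [ha0.2] : 0 ≤ 1 - lam a)
            linarith
  intro t
  have hE : 0 ≤ C * r ^ t := by positivity
  exact ⟨(pi_norm_le_iff_of_nonneg hE).2 (main t).1, (pi_norm_le_iff_of_nonneg hE).2 (main t).2⟩
end

section
/- If y(0) is not a consensus vector (i.e. y(0) ≠ α·1 for every α ∈ ℝ), then the limiting opinions satisfy max_i y_i(0) > max_i y*_i > max_i ŷ*_i and min_i y_i(0) < min_i y*_i < min_i ŷ*_i, and moreover min_i ŷ*_i ≠ max_i ŷ*_i. -/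
/-!
The limits `y = y*` and `z = ŷ*` solve the coupled averaging equations
`z = Φ y + (I − Φ) M z` and `y = Λ (W̃ y + Ŵ z) + (I − Λ) y(0)`. Evaluating each equation at an index
where its unknown is largest gives the weak maximum principle `z ≤ max y` and `y ≤ max y(0)`
(`expressed_le`, `private_le`). Applied to the homogeneous equations, it also shows that the matrices
inverted in `S` and `R` are nonsingular, so the equations do hold (`isEquilibrium_Rmat`).

For strictness: if `z k` equals an upper bound `m` of `y`, then equality in the averages spreads the
value `m` along edges of the graph of `W`; by irreducibility `z`, then `y`, then `y(0)` are
all equal to `m` (`const_of_expressed_eq`). If `y i = max y(0)`, then `i` can have no in-neighbour other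
than itself, as `z < max y(0)` everywhere, which irreducibility excludes when `n ≥ 2`
(`private_lt`). The bounds on minima are those on maxima for the negated vectors.
-/

open Matrix BigOperators

/-- The pair `(y, z)` is an equilibrium for the initial opinions `y0`: expressed opinions
`z = Φ y + (I − Φ) M z` and private opinions `y = Λ (W̃ y + Ŵ z) + (I − Λ) y0`, written
coordinatewise with the diagonal term of `∑ j, W i j * z j` corrected. -/
def IsEquilibrium {n : ℕ} (W M : Matrix (Fin n) (Fin n) ℝ) (lam phi y0 y z : Fin n → ℝ) : Prop :=
  (∀ i, z i = phi i * y i + (1 - phi i) * ∑ j, M i j * z j) ∧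
  (∀ i, y i = lam i * (W i i * (y i - z i) + ∑ j, W i j * z j) + (1 - lam i) * y0 i)

lemma IsEquilibrium.neg {n : ℕ} {W M : Matrix (Fin n) (Fin n) ℝ} {lam phi y0 y z : Fin n → ℝ}
    (h : IsEquilibrium W M lam phi y0 y z) : IsEquilibrium W M lam phi (-y0) (-y) (-z) := by
  refine ⟨fun i => ?_, fun i => ?_⟩
  · simp only [Pi.neg_apply, mul_neg, Finset.sum_neg_distrib]
    linarith [h.1 i]
  · simp only [Pi.neg_apply, mul_neg, Finset.sum_neg_distrib]
    linarith [h.2 i]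

lemma avg_le {n : ℕ} {A : Matrix (Fin n) (Fin n) ℝ} (hA : ∀ i j, 0 ≤ A i j)
    (hrow : ∀ i, ∑ j, A i j = 1) {z : Fin n → ℝ} {m : ℝ} (hz : ∀ j, z j ≤ m) (i : Fin n) :
    ∑ j, A i j * z j ≤ m := by
  calc ∑ j, A i j * z j ≤ ∑ j, A i j * m :=
        Finset.sum_le_sum fun j _ => mul_le_mul_of_nonneg_left (hz j) (hA i j)
    _ = m := by rw [← Finset.sum_mul, hrow, one_mul]

/-- A weighted average of values `≤ m` that reaches `m` has all its weight on the value `m`. -/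
lemma eq_of_avg_ge {n : ℕ} {A : Matrix (Fin n) (Fin n) ℝ} (hA : ∀ i j, 0 ≤ A i j)
    (hrow : ∀ i, ∑ j, A i j = 1) {z : Fin n → ℝ} {m : ℝ} (hz : ∀ j, z j ≤ m) {i : Fin n}
    (h : m ≤ ∑ j, A i j * z j) {k : Fin n} (hk : 0 < A i k) : z k = m := by
  have h0 : ∑ j, A i j * (m - z j) = m - ∑ j, A i j * z j := by
    simp only [mul_sub, Finset.sum_sub_distrib, ← Finset.sum_mul, hrow, one_mul]
  have h1 : A i k * (m - z k) ≤ ∑ j, A i j * (m - z j) :=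
    Finset.single_le_sum (f := fun j => A i j * (m - z j))
      (fun j _ => mul_nonneg (hA i j) (sub_nonneg.2 (hz j))) (Finset.mem_univ k)
  have h2 : m - z k ≤ 0 := by
    by_contra hc
    have := mul_pos hk (not_le.1 hc)
    linarith
  linarith [hz k]

/-- Maximum principle for `z = Φ y + (I − Φ) M z`: `z` is bounded by any bound on `y`. -/
lemma expressed_le {n : ℕ} {M : Matrix (Fin n) (Fin n) ℝ} (hM : ∀ i j, 0 ≤ M i j)
    (hrow : ∀ i, ∑ j, M i j = 1) {phi : Fin n → ℝ} (hphi : ∀ i, phi i ∈ Set.Ioo (0 : ℝ) 1)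
    {y z : Fin n → ℝ} (h : ∀ i, z i = phi i * y i + (1 - phi i) * ∑ j, M i j * z j)
    {m : ℝ} (hy : ∀ i, y i ≤ m) (i : Fin n) : z i ≤ m := by
  have : Nonempty (Fin n) := ⟨i⟩
  obtain ⟨k, hk⟩ := Finite.exists_max z
  refine (hk i).trans ?_
  have h1 := mul_le_mul_of_nonneg_left (avg_le hM hrow hk k) (sub_pos.2 (hphi k).2).le
  have h2 : 0 ≤ phi k * (y k - z k) := by linarith [h k]
  have := nonneg_of_mul_nonneg_right h2 (hphi k).1
  linarith [hy k]

lemma private_le {n : ℕ} {W M : Matrix (Fin n) (Fin n) ℝ}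
    (hWnn : ∀ i j, 0 ≤ W i j) (hWrow : ∀ i, ∑ j, W i j = 1)
    (hMnn : ∀ i j, 0 ≤ M i j) (hMrow : ∀ i, ∑ j, M i j = 1)
    {lam phi : Fin n → ℝ} (hlam : ∀ i, lam i ∈ Set.Ioo (0 : ℝ) 1)
    (hphi : ∀ i, phi i ∈ Set.Ioo (0 : ℝ) 1) {y0 y z : Fin n → ℝ}
    (h : IsEquilibrium W M lam phi y0 y z) {a : ℝ} (ha : ∀ i, y0 i ≤ a) (i : Fin n) :
    y i ≤ a := by
  have : Nonempty (Fin n) := ⟨i⟩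
  obtain ⟨k, hk⟩ := Finite.exists_max y
  refine (hk i).trans ?_
  have hz := expressed_le hMnn hMrow hphi h.1 hk
  -- the neighbour average at `k`, with `y k` in the diagonal slot, is an average of values `≤ y k`
  have h1 : W k k * (y k - z k) + ∑ j, W k j * z j ≤ y k := by
    have e : W k k * (y k - z k) + ∑ j, W k j * z j
        = ∑ j, W k j * (if j = k then y k else z j) := by
      rw [← Finset.add_sum_erase _ _ (Finset.mem_univ k),
        ← Finset.add_sum_erase _ (fun j => W k j * (if j = k then y k else z j))
          (Finset.mem_univ k)]
      have r : ∑ j ∈ Finset.univ.erase k, W k j * (if j = k then y k else z j)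
          = ∑ j ∈ Finset.univ.erase k, W k j * z j :=
        Finset.sum_congr rfl fun j hj => by rw [if_neg (Finset.ne_of_mem_erase hj)]
      rw [r, if_pos rfl]
      ring
    rw [e]
    exact avg_le hWnn hWrow (fun j => by split_ifs; exacts [le_rfl, hz j]) k
  have h2 := mul_le_mul_of_nonneg_left h1 (hlam k).1.le
  have h3 : 0 ≤ (1 - lam k) * (y0 k - y k) := by linarith [h.2 k]
  have := nonneg_of_mul_nonneg_right h3 (sub_pos.2 (hlam k).2)
  linarith [ha k]

/-- Since the set where `z` attains an upper bound `m` of `y` is closed under passing to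
in-neighbours, irreducibility makes `z` constant; then `y`, and hence `y0`, is constant too. -/
lemma const_of_expressed_eq {n : ℕ} {W M : Matrix (Fin n) (Fin n) ℝ}
    (hWrow : ∀ i, ∑ j, W i j = 1)
    (hWirr : ∀ i j, i ≠ j → Relation.TransGen (fun a b => 0 < W b a) i j)
    (hMnn : ∀ i j, 0 ≤ M i j) (hMrow : ∀ i, ∑ j, M i j = 1)
    (hMW : ∀ i j, 0 < M i j ↔ 0 < W i j)
    {lam phi : Fin n → ℝ} (hlam : ∀ i, lam i ∈ Set.Ioo (0 : ℝ) 1)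
    (hphi : ∀ i, phi i ∈ Set.Ioo (0 : ℝ) 1) {y0 y z : Fin n → ℝ}
    (h : IsEquilibrium W M lam phi y0 y z) {m : ℝ} (hy : ∀ i, y i ≤ m) {k : Fin n}
    (hk : z k = m) : y0 = fun _ => m := by
  have hz := expressed_le hMnn hMrow hphi h.1 hy
  have havg : ∀ j, z j = m → m ≤ ∑ l, M j l * z l := by
    intro j hj
    have h1 := mul_le_mul_of_nonneg_left (hy j) (hphi j).1.le
    have h2 : 0 ≤ (1 - phi j) * (∑ l, M j l * z l - m) := by linarith [h.1 j]
    have := nonneg_of_mul_nonneg_right h2 (sub_pos.2 (hphi j).2)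
    linarith
  have hstep : ∀ a b, 0 < W b a → z b = m → z a = m := fun a b hab hb =>
    eq_of_avg_ge hMnn hMrow hz (havg b hb) ((hMW b a).2 hab)
  have hzall : ∀ i, z i = m := by
    intro i
    by_cases hik : i = k
    · rw [hik, hk]
    · have := hWirr i k hik
      clear hik
      induction this with
      | single hab => exact hstep _ _ hab hk
      | tail _ hbc ih => exact ih (hstep _ _ hbc hk)
  have hyall : ∀ i, y i = m := by
    intro i
    have h1 := mul_le_mul_of_nonneg_left (avg_le hMnn hMrow hz i) (sub_pos.2 (hphi i).2).le
    have h2 : 0 ≤ phi i * (y i - m) := by linarith [h.1 i, hzall i]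
    have := nonneg_of_mul_nonneg_right h2 (hphi i).1
    linarith [hy i]
  funext i
  have h1 := h.2 i
  simp only [hzall, hyall, ← Finset.sum_mul, hWrow] at h1
  have h2 : (1 - lam i) * (y0 i - m) = 0 := by linarith
  have := (mul_eq_zero.1 h2).resolve_left (sub_pos.2 (hlam i).2).ne'
  linarith

lemma private_lt {n : ℕ} (hn : 2 ≤ n) {W M : Matrix (Fin n) (Fin n) ℝ}
    (hWnn : ∀ i j, 0 ≤ W i j) (hWrow : ∀ i, ∑ j, W i j = 1)
    (hWirr : ∀ i j, i ≠ j → Relation.TransGen (fun a b => 0 < W b a) i j)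
    (hMnn : ∀ i j, 0 ≤ M i j) (hMrow : ∀ i, ∑ j, M i j = 1)
    (hMW : ∀ i j, 0 < M i j ↔ 0 < W i j)
    {lam phi : Fin n → ℝ} (hlam : ∀ i, lam i ∈ Set.Ioo (0 : ℝ) 1)
    (hphi : ∀ i, phi i ∈ Set.Ioo (0 : ℝ) 1) {y0 y z : Fin n → ℝ}
    (h : IsEquilibrium W M lam phi y0 y z) (hy0 : ∀ α : ℝ, y0 ≠ fun _ => α)
    {a : ℝ} (ha : ∀ i, y0 i ≤ a) (i : Fin n) : y i < a := by
  have hy := private_le hWnn hWrow hMnn hMrow hlam hphi h ha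
  have hz : ∀ j, z j < a := fun j =>
    (expressed_le hMnn hMrow hphi h.1 hy j).lt_of_ne fun e =>
      hy0 a (const_of_expressed_eq hWrow hWirr hMnn hMrow hMW hlam hphi h hy e)
  refine (hy i).lt_of_ne fun e => ?_
  -- if `y i = a`, all weight of row `i` sits on the diagonal, so `i` has no other in-neighbour
  have hoff : ∀ k, k ≠ i → ¬ 0 < W i k := by
    intro k hki hk
    have e1 : W i i * (y i - z i) + ∑ j, W i j * z j
        = a - ∑ j ∈ Finset.univ.erase i, W i j * (a - z j) := by
      have r := hWrow i
      rw [← Finset.add_sum_erase _ _ (Finset.mem_univ i)] at r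
      rw [← Finset.add_sum_erase _ _ (Finset.mem_univ i)]
      simp only [mul_sub, Finset.sum_sub_distrib, ← Finset.sum_mul]
      rw [e]
      linear_combination a * r
    have e2 : 0 < ∑ j ∈ Finset.univ.erase i, W i j * (a - z j) :=
      Finset.sum_pos' (fun j _ => mul_nonneg (hWnn i j) (sub_pos.2 (hz j)).le)
        ⟨k, Finset.mem_erase.2 ⟨hki, Finset.mem_univ k⟩, mul_pos hk (sub_pos.2 (hz k))⟩
    have h1 := h.2 i
    rw [e1, e] at h1
    have := mul_pos (hlam i).1 e2
    have := mul_le_mul_of_nonneg_left (ha i) (sub_pos.2 (hlam i).2).le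
    linarith
  have : Nontrivial (Fin n) := Fin.nontrivial_iff_two_le.2 hn
  obtain ⟨k, hki⟩ := exists_ne i
  have hpath : ∀ b, Relation.TransGen (fun a b => 0 < W b a) k b → b ≠ i := by
    intro b hb
    induction hb with
    | single hab => rintro rfl; exact hoff _ hki hab
    | tail _ hbc ih => rintro rfl; exact hoff _ ih hbc
  exact hpath i (hWirr k i hki) rfl

lemma isUnit_det_of_ker {n : ℕ} {A : Matrix (Fin n) (Fin n) ℝ} (h : ∀ v, A *ᵥ v = 0 → v = 0) :
    IsUnit A.det := by
  rw [← Matrix.isUnit_iff_isUnit_det, ← Matrix.mulVec_injective_iff_isUnit]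
  intro u v huv
  exact sub_eq_zero.1 (h _ (by rw [Matrix.mulVec_sub, sub_eq_zero]; exact huv))

lemma P22_mulVec {n : ℕ} (M : Matrix (Fin n) (Fin n) ℝ) (phi z : Fin n → ℝ) (i : Fin n) :
    (P22 M phi *ᵥ z) i = (1 - phi i) * ∑ j, M i j * z j := by
  rw [P22, ← Matrix.mulVec_mulVec, Matrix.sub_mulVec, Matrix.one_mulVec, Pi.sub_apply,
    Matrix.mulVec_diagonal]
  simp only [Matrix.mulVec, dotProduct]
  ring

/-- `z = S y` solves the expressed-opinion equation, because `I − P₂₂` is invertible. -/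
lemma Smat_spec {n : ℕ} {M : Matrix (Fin n) (Fin n) ℝ}
    (hMnn : ∀ i j, 0 ≤ M i j) (hMrow : ∀ i, ∑ j, M i j = 1) {phi : Fin n → ℝ}
    (hphi : ∀ i, phi i ∈ Set.Ioo (0 : ℝ) 1) (y : Fin n → ℝ) (i : Fin n) :
    (Smat M phi *ᵥ y) i
      = phi i * y i + (1 - phi i) * ∑ j, M i j * (Smat M phi *ᵥ y) j := by
  have hu : IsUnit (1 - P22 M phi).det := by
    refine isUnit_det_of_ker fun v hv => ?_
    have hv' : ∀ i, v i = (1 - phi i) * ∑ j, M i j * v j := fun i => by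
      have := congrFun hv i
      rw [Matrix.sub_mulVec, Matrix.one_mulVec, Pi.sub_apply, P22_mulVec] at this
      simpa [sub_eq_zero] using this
    funext i
    have h1 := expressed_le hMnn hMrow hphi (y := 0) (z := v) (m := 0)
      (fun i => by simpa using hv' i) (fun _ => le_rfl) i
    have h2 := expressed_le hMnn hMrow hphi (y := 0) (z := -v) (m := 0)
      (fun i => by simpa using hv' i) (fun _ => le_rfl) i
    simp only [Pi.neg_apply] at h2
    simp only [Pi.zero_apply]
    linarith
  have h : (1 - P22 M phi) *ᵥ (Smat M phi *ᵥ y) = Matrix.diagonal phi *ᵥ y := by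
    rw [Matrix.mulVec_mulVec, Smat, Matrix.mul_nonsing_inv_cancel_left _ _ hu]
  have := congrFun h i
  rw [Matrix.sub_mulVec, Matrix.one_mulVec, Pi.sub_apply, P22_mulVec,
    Matrix.mulVec_diagonal] at this
  linarith

lemma P_mulVec {n : ℕ} {W M : Matrix (Fin n) (Fin n) ℝ} {lam phi y z : Fin n → ℝ}
    (hz : ∀ i, z i = phi i * y i + (1 - phi i) * ∑ j, M i j * z j) (i : Fin n) :
    (P11 W lam phi *ᵥ y + P12 W M lam phi *ᵥ z) i
      = lam i * (W i i * (y i - z i) + ∑ j, W i j * z j) := by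
  have e : z = Matrix.diagonal phi *ᵥ y + P22 M phi *ᵥ z := by
    funext i
    rw [Pi.add_apply, P22_mulVec, Matrix.mulVec_diagonal]
    exact hz i
  have e2 : P11 W lam phi *ᵥ y + P12 W M lam phi *ᵥ z
      = Matrix.diagonal lam *ᵥ (diagPart W *ᵥ y + offDiagPart W *ᵥ z) := by
    conv_rhs => rw [e]
    simp only [P11, P12, P22, Matrix.mulVec_add, Matrix.add_mulVec, Matrix.mulVec_mulVec,
      Matrix.mul_add, Matrix.mul_assoc, add_assoc]
  rw [e2, Matrix.mulVec_diagonal, Pi.add_apply, offDiagPart, Matrix.sub_mulVec, Pi.sub_apply,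
    diagPart, Matrix.mulVec_diagonal, Matrix.mulVec_diagonal]
  simp only [Matrix.mulVec, dotProduct]
  ring

/-- `(R y0, S R y0)` is an equilibrium, because `I − P₁₁ − P₁₂ S` is invertible. -/
lemma isEquilibrium_Rmat {n : ℕ} {W M : Matrix (Fin n) (Fin n) ℝ}
    (hWnn : ∀ i j, 0 ≤ W i j) (hWrow : ∀ i, ∑ j, W i j = 1)
    (hMnn : ∀ i j, 0 ≤ M i j) (hMrow : ∀ i, ∑ j, M i j = 1)
    {lam phi : Fin n → ℝ} (hlam : ∀ i, lam i ∈ Set.Ioo (0 : ℝ) 1)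
    (hphi : ∀ i, phi i ∈ Set.Ioo (0 : ℝ) 1) (y0 : Fin n → ℝ) :
    IsEquilibrium W M lam phi y0 (Rmat W M lam phi *ᵥ y0)
      (Smat M phi *ᵥ (Rmat W M lam phi *ᵥ y0)) := by
  have key : ∀ y x : Fin n → ℝ,
      (1 - P11 W lam phi - P12 W M lam phi * Smat M phi) *ᵥ y
        = (1 - Matrix.diagonal lam) *ᵥ x →
      IsEquilibrium W M lam phi x y (Smat M phi *ᵥ y) := by
    intro y x hxy
    refine ⟨Smat_spec hMnn hMrow hphi y, fun i => ?_⟩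
    have h1 := P_mulVec (W := W) (lam := lam) (Smat_spec hMnn hMrow hphi y) i
    have h2 := congrFun hxy i
    simp only [Matrix.sub_mulVec, Matrix.one_mulVec, Pi.sub_apply, Matrix.mulVec_diagonal,
      ← Matrix.mulVec_mulVec] at h2
    rw [Pi.add_apply] at h1
    linarith
  have hu : IsUnit (1 - P11 W lam phi - P12 W M lam phi * Smat M phi).det := by
    refine isUnit_det_of_ker fun v hv => ?_
    have h := key v 0 (by rw [hv, Matrix.mulVec_zero])
    funext i
    have h1 := private_le hWnn hWrow hMnn hMrow hlam hphi h (a := 0) (fun _ => le_rfl) i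
    have h2 := private_le hWnn hWrow hMnn hMrow hlam hphi h.neg (a := 0) (fun _ => by simp) i
    simp only [Pi.neg_apply] at h2
    simp only [Pi.zero_apply]
    linarith
  refine key _ _ ?_
  rw [Matrix.mulVec_mulVec, Rmat, Matrix.mul_nonsing_inv_cancel_left _ _ hu]

/-- If `y(0)` is not a consensus vector, then with
`y* = R y(0)` and `ŷ* = S y*`,
`max y(0) > max y* > max ŷ*`, `min y(0) < min y* < min ŷ*`, and
`min ŷ* ≠ max ŷ*`. -/
theorem stmt_8 {n : ℕ} (hn : 2 ≤ n) (W M : Matrix (Fin n) (Fin n) ℝ)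
    (hWnn : ∀ i j, 0 ≤ W i j) (hWrow : ∀ i, ∑ j, W i j = 1)
    (hWirr : ∀ i j, i ≠ j → Relation.TransGen (fun a b => 0 < W b a) i j)
    (hWprim : ∃ k : ℕ, 0 < k ∧ ∀ i j, 0 < (W ^ k) i j)
    (hMnn : ∀ i j, 0 ≤ M i j) (hMrow : ∀ i, ∑ j, M i j = 1)
    (hMW : ∀ i j, 0 < M i j ↔ 0 < W i j)
    (lam phi : Fin n → ℝ)
    (hlam : ∀ i, lam i ∈ Set.Ioo (0 : ℝ) 1)
    (hphi : ∀ i, phi i ∈ Set.Ioo (0 : ℝ) 1)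
    (y0 : Fin n → ℝ) (hy0 : ∀ α : ℝ, y0 ≠ fun _ => α) :
    (⨆ i, y0 i) > (⨆ i, (Rmat W M lam phi *ᵥ y0) i) ∧
    (⨆ i, (Rmat W M lam phi *ᵥ y0) i) >
      (⨆ i, (Smat M phi *ᵥ (Rmat W M lam phi *ᵥ y0)) i) ∧
    (⨅ i, y0 i) < (⨅ i, (Rmat W M lam phi *ᵥ y0) i) ∧
    (⨅ i, (Rmat W M lam phi *ᵥ y0) i) <
      (⨅ i, (Smat M phi *ᵥ (Rmat W M lam phi *ᵥ y0)) i) ∧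
    (⨅ i, (Smat M phi *ᵥ (Rmat W M lam phi *ᵥ y0)) i) ≠
      (⨆ i, (Smat M phi *ᵥ (Rmat W M lam phi *ᵥ y0)) i) := by
  have : Nonempty (Fin n) := ⟨⟨0, by omega⟩⟩
  have h := isEquilibrium_Rmat hWnn hWrow hMnn hMrow hlam hphi y0
  set y := Rmat W M lam phi *ᵥ y0
  set z := Smat M phi *ᵥ y
  have hy0' : ∀ α : ℝ, -y0 ≠ fun _ => α := fun α e =>
    hy0 (-α) (by rw [← neg_neg y0, e]; rfl)
  have le_sup : ∀ (f : Fin n → ℝ) i, f i ≤ ⨆ i, f i := fun f i =>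
    le_ciSup (Set.finite_range f).bddAbove i
  have inf_le : ∀ (f : Fin n → ℝ) i, ⨅ i, f i ≤ f i := fun f i =>
    ciInf_le (Set.finite_range f).bddBelow i
  have z_lt : ∀ m, (∀ i, y i ≤ m) → ∀ i, z i < m := fun m hm i =>
    (expressed_le hMnn hMrow hphi h.1 hm i).lt_of_ne fun e =>
      hy0 m (const_of_expressed_eq hWrow hWirr hMnn hMrow hMW hlam hphi h hm e)
  have lt_z : ∀ m, (∀ i, m ≤ y i) → ∀ i, m < z i := fun m hm i => by
    have hm' : ∀ i, (-y) i ≤ -m := fun i => neg_le_neg (hm i)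
    have := (expressed_le hMnn hMrow hphi h.neg.1 hm' i).lt_of_ne fun e =>
      hy0' (-m) (const_of_expressed_eq hWrow hWirr hMnn hMrow hMW hlam hphi h.neg hm' e)
    exact neg_lt_neg_iff.1 this
  refine ⟨?_, ?_, ?_, ?_, ?_⟩
  · obtain ⟨i, hi⟩ := exists_eq_ciSup_of_finite (f := y)
    rw [← hi]
    exact private_lt hn hWnn hWrow hWirr hMnn hMrow hMW hlam hphi h hy0 (le_sup y0) i
  · obtain ⟨i, hi⟩ := exists_eq_ciSup_of_finite (f := z)
    rw [← hi]
    exact z_lt _ (le_sup y) i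
  · obtain ⟨i, hi⟩ := exists_eq_ciInf_of_finite (f := y)
    rw [← hi]
    exact neg_lt_neg_iff.1 (private_lt hn hWnn hWrow hWirr hMnn hMrow hMW hlam hphi h.neg hy0'
      (fun i => neg_le_neg (inf_le y0 i)) i)
  · obtain ⟨i, hi⟩ := exists_eq_ciInf_of_finite (f := z)
    rw [← hi]
    exact lt_z _ (inf_le y) i
  · intro e
    have hz : ∀ i, z i = ⨆ i, z i := fun i =>
      le_antisymm (le_sup z i) (e ▸ inf_le z i)
    -- a constant `z` forces `y` to be the same constant, contradicting `z < m` for bounds `m` of `y`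
    have hy : ∀ i, y i ≤ ⨆ i, z i := fun i => by
      have h1 := h.1 i
      have h2 : ∑ j, M i j * z j = ⨆ i, z i := by
        rw [Finset.sum_congr rfl fun j _ => by rw [hz j], ← Finset.sum_mul, hMrow, one_mul]
      rw [h2, hz i] at h1
      have h3 : phi i * (y i - ⨆ i, z i) = 0 := by linarith
      have := (mul_eq_zero.1 h3).resolve_left (hphi i).1.ne'
      linarith
    obtain ⟨i⟩ := this
    exact (z_lt _ hy i).ne (hz i)
end

section
/- The vector y* = R y(0) is a consensus vector if and only if y(0) is a consensus vector; that is, for every β ∈ ℝ, R y(0) = β·1 holds if and only if y(0) = β·1. -/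
/-!
Write `A = P₁₁ + P₁₂ S`. For a vector `x`, the vector `z = S x` is the unique solution of
`z = (I − Φ) M z + Φ x`, and hence `A x = Λ (W̃ x + Ŵ z)`. Two consequences follow.

* If `x = β·1` then `z = β·1`, so `A x = Λ W x = Λ x`; thus `(I − A)(β·1) = (I − Λ)(β·1)`.
* In the sup norm `‖z‖ ≤ ‖x‖`, so `|(A x)ᵢ| ≤ λᵢ ‖x‖` because row `i` of `W̃ x + Ŵ z` is a convex
  combination of `xᵢ` and entries of `z`. As `λᵢ < 1`, the matrix `I − A` is injective.

Therefore `R y₀ = β·1` iff `(I − Λ) y₀ = (I − A)(β·1) = (I − Λ)(β·1)`, and `I − Λ` is invertible.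
-/

open Matrix BigOperators

lemma abs_mulVec_le_norm {n : ℕ} {N : Matrix (Fin n) (Fin n) ℝ}
    (hnn : ∀ i j, 0 ≤ N i j) (hrow : ∀ i, ∑ j, N i j = 1) (v : Fin n → ℝ) (i : Fin n) :
    |(N *ᵥ v) i| ≤ ‖v‖ := by
  calc |∑ j, N i j * v j| ≤ ∑ j, |N i j * v j| := Finset.abs_sum_le_sum_abs _ _
    _ ≤ ∑ j, N i j * ‖v‖ := by
        refine Finset.sum_le_sum fun j _ => ?_
        rw [abs_mul, abs_of_nonneg (hnn i j)]
        exact mul_le_mul_of_nonneg_left (norm_le_pi_norm v j) (hnn i j)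
    _ = ‖v‖ := by rw [← Finset.sum_mul, hrow, one_mul]

lemma mulVec_const {n : ℕ} {N : Matrix (Fin n) (Fin n) ℝ}
    (hrow : ∀ i, ∑ j, N i j = 1) (β : ℝ) : N *ᵥ (fun _ => β) = fun _ => β := by
  ext i
  simp only [mulVec, dotProduct]
  rw [← Finset.sum_mul, hrow, one_mul]

/-- A vector whose every entry is bounded by a proper fraction of its sup norm vanishes. -/
lemma eq_zero_of_abs_le_mul_norm {n : ℕ} {x c : Fin n → ℝ} (hc : ∀ i, c i < 1)
    (h : ∀ i, |x i| ≤ c i * ‖x‖) : x = 0 := by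
  by_contra hx
  have hpos : 0 < ‖x‖ := norm_pos_iff.2 hx
  have : ‖x‖ < ‖x‖ := (pi_norm_lt_iff hpos).2 fun i =>
    (h i).trans_lt (by nlinarith [hc i])
  exact lt_irrefl _ this

lemma isUnit_det_of_mulVec_eq_zero {n : ℕ} {N : Matrix (Fin n) (Fin n) ℝ}
    (h : ∀ x, N *ᵥ x = 0 → x = 0) : IsUnit N.det := by
  rw [isUnit_iff_ne_zero]
  intro h0
  obtain ⟨v, hv, hv0⟩ := Matrix.exists_mulVec_eq_zero_iff.2 h0
  exact hv (h v hv0)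

lemma P22_mulVec_apply {n : ℕ} (M : Matrix (Fin n) (Fin n) ℝ) (phi z : Fin n → ℝ) (i : Fin n) :
    (P22 M phi *ᵥ z) i = (1 - phi i) * (M *ᵥ z) i := by
  simp [P22, ← mulVec_mulVec, sub_mulVec, mulVec_diagonal, sub_mul]

lemma isUnit_det_one_sub_P22 {n : ℕ} {M : Matrix (Fin n) (Fin n) ℝ}
    (hMnn : ∀ i j, 0 ≤ M i j) (hMrow : ∀ i, ∑ j, M i j = 1) {phi : Fin n → ℝ}
    (hphi : ∀ i, phi i ∈ Set.Ioo (0 : ℝ) 1) : IsUnit (1 - P22 M phi).det := by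
  refine isUnit_det_of_mulVec_eq_zero fun x hx => ?_
  refine eq_zero_of_abs_le_mul_norm (c := fun i => 1 - phi i)
    (fun i => by linarith [(hphi i).1]) fun i => ?_
  have hi := congrFun hx i
  rw [sub_mulVec, one_mulVec, Pi.sub_apply, P22_mulVec_apply, Pi.zero_apply, sub_eq_zero] at hi
  rw [hi, abs_mul, abs_of_pos (by linarith [(hphi i).2])]
  exact mul_le_mul_of_nonneg_left (abs_mulVec_le_norm hMnn hMrow x i) (by linarith [(hphi i).2])

/-- `S x` solves the fixed-point equation `z = (I − Φ) M z + Φ x`. -/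
lemma Smat_mulVec_apply {n : ℕ} {M : Matrix (Fin n) (Fin n) ℝ} {phi : Fin n → ℝ}
    (hu : IsUnit (1 - P22 M phi).det) (x : Fin n → ℝ) (i : Fin n) :
    (Smat M phi *ᵥ x) i = (1 - phi i) * (M *ᵥ (Smat M phi *ᵥ x)) i + phi i * x i := by
  have h : (1 - P22 M phi) *ᵥ (Smat M phi *ᵥ x) = diagonal phi *ᵥ x := by
    rw [mulVec_mulVec, Smat, mul_nonsing_inv_cancel_left _ _ hu]
  have hi := congrFun h i
  rw [sub_mulVec, one_mulVec, Pi.sub_apply, P22_mulVec_apply, mulVec_diagonal] at hi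
  linarith

lemma Smat_mulVec_const {n : ℕ} {M : Matrix (Fin n) (Fin n) ℝ} {phi : Fin n → ℝ}
    (hMrow : ∀ i, ∑ j, M i j = 1) (hu : IsUnit (1 - P22 M phi).det) (β : ℝ) :
    Smat M phi *ᵥ (fun _ => β) = fun _ => β := by
  have h : diagonal phi *ᵥ (fun _ => β) = (1 - P22 M phi) *ᵥ (fun _ => β) := by
    ext i
    rw [sub_mulVec, one_mulVec, Pi.sub_apply, P22_mulVec_apply, mulVec_diagonal,
      mulVec_const hMrow]
    ring
  rw [Smat, ← mulVec_mulVec, h, mulVec_mulVec, nonsing_inv_mul _ hu, one_mulVec]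

lemma norm_Smat_mulVec_le {n : ℕ} {M : Matrix (Fin n) (Fin n) ℝ}
    (hMnn : ∀ i j, 0 ≤ M i j) (hMrow : ∀ i, ∑ j, M i j = 1) {phi : Fin n → ℝ}
    (hphi : ∀ i, phi i ∈ Set.Ioo (0 : ℝ) 1) (x : Fin n → ℝ) :
    ‖Smat M phi *ᵥ x‖ ≤ ‖x‖ := by
  have hu := isUnit_det_one_sub_P22 hMnn hMrow hphi
  by_contra! hlt
  -- Otherwise every entry of `z = S x` would be a strict convex combination below `‖z‖`.
  have : ‖Smat M phi *ᵥ x‖ < ‖Smat M phi *ᵥ x‖ := by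
    refine (pi_norm_lt_iff ((norm_nonneg x).trans_lt hlt)).2 fun i => ?_
    have hp := hphi i
    have h1 := abs_mulVec_le_norm hMnn hMrow (Smat M phi *ᵥ x) i
    have h2 : |x i| ≤ ‖x‖ := norm_le_pi_norm x i
    rw [Smat_mulVec_apply hu, Real.norm_eq_abs]
    refine (abs_add_le _ _).trans_lt ?_
    rw [abs_mul, abs_mul, abs_of_pos hp.1, abs_of_pos (sub_pos.2 hp.2)]
    nlinarith [mul_le_mul_of_nonneg_left h1 (sub_pos.2 hp.2).le,
      mul_lt_mul_of_pos_left (h2.trans_lt hlt) hp.1]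
  exact lt_irrefl _ this

/-- Row `i` of `(P₁₁ + P₁₂ S) x` is `λᵢ` times row `i` of `W` applied to the vector `S x`
with its `i`-th entry replaced by `xᵢ`. -/
lemma P11_add_P12_mul_Smat_mulVec_apply {n : ℕ} {W M : Matrix (Fin n) (Fin n) ℝ}
    {lam phi : Fin n → ℝ} (hu : IsUnit (1 - P22 M phi).det) (x : Fin n → ℝ) (i : Fin n) :
    ((P11 W lam phi + P12 W M lam phi * Smat M phi) *ᵥ x) i =
      lam i * (W *ᵥ Function.update (Smat M phi *ᵥ x) i (x i)) i := by
  have hz : diagonal phi *ᵥ x + (1 - diagonal phi) *ᵥ (M *ᵥ (Smat M phi *ᵥ x)) =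
      Smat M phi *ᵥ x := by
    ext j
    rw [Smat_mulVec_apply hu x j]
    simp only [Pi.add_apply, sub_mulVec, one_mulVec, Pi.sub_apply, mulVec_diagonal]
    ring
  have hA : (P11 W lam phi + P12 W M lam phi * Smat M phi) *ᵥ x =
      diagonal lam *ᵥ (diagPart W *ᵥ x + offDiagPart W *ᵥ (Smat M phi *ᵥ x)) := by
    conv_rhs => rw [← hz]
    simp only [P11, P12, add_mulVec, ← mulVec_mulVec, mulVec_add, add_assoc]
  have hupd : Function.update (Smat M phi *ᵥ x) i (x i) =
      Smat M phi *ᵥ x + Pi.single i (x i - (Smat M phi *ᵥ x) i) := by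
    ext j
    by_cases hj : j = i
    · subst hj; simp
    · simp [hj]
  rw [hA, hupd, mulVec_diagonal, mulVec_add, offDiagPart, sub_mulVec, diagPart]
  simp only [Pi.add_apply, Pi.sub_apply, mulVec_diagonal, mulVec_single, Pi.smul_apply,
    col_apply, MulOpposite.smul_eq_mul_unop, MulOpposite.unop_op]
  ring

/-- `y* = R y(0)` is a consensus vector if and only if
`y(0)` is: for every `β ∈ ℝ`, `R y(0) = β·1 ↔ y(0) = β·1`. -/
theorem stmt_9 {n : ℕ} (hn : 2 ≤ n) (W M : Matrix (Fin n) (Fin n) ℝ)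
    (hWnn : ∀ i j, 0 ≤ W i j) (hWrow : ∀ i, ∑ j, W i j = 1)
    (hWirr : ∀ i j, i ≠ j → Relation.TransGen (fun a b => 0 < W b a) i j)
    (hWprim : ∃ k : ℕ, 0 < k ∧ ∀ i j, 0 < (W ^ k) i j)
    (hMnn : ∀ i j, 0 ≤ M i j) (hMrow : ∀ i, ∑ j, M i j = 1)
    (hMW : ∀ i j, 0 < M i j ↔ 0 < W i j)
    (lam phi : Fin n → ℝ)
    (hlam : ∀ i, lam i ∈ Set.Ioo (0 : ℝ) 1)
    (hphi : ∀ i, phi i ∈ Set.Ioo (0 : ℝ) 1) :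
    ∀ y0 : Fin n → ℝ, ∀ β : ℝ,
      Rmat W M lam phi *ᵥ y0 = (fun _ => β) ↔ y0 = fun _ => β := by
  intro y0 β
  have hu := isUnit_det_one_sub_P22 hMnn hMrow hphi
  set A := P11 W lam phi + P12 W M lam phi * Smat M phi with hA
  have hR : Rmat W M lam phi = (1 - A)⁻¹ * (1 - diagonal lam) := by
    rw [Rmat, hA, sub_sub]
  have hAu : IsUnit (1 - A).det := by
    refine isUnit_det_of_mulVec_eq_zero fun x hx => ?_
    refine eq_zero_of_abs_le_mul_norm (c := lam) (fun i => (hlam i).2) fun i => ?_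
    have hi := congrFun hx i
    rw [sub_mulVec, one_mulVec, Pi.sub_apply, hA, P11_add_P12_mul_Smat_mulVec_apply hu,
      Pi.zero_apply, sub_eq_zero] at hi
    have hupd : ‖Function.update (Smat M phi *ᵥ x) i (x i)‖ ≤ ‖x‖ := by
      refine (pi_norm_le_iff_of_nonneg (norm_nonneg x)).2 fun j => ?_
      by_cases hj : j = i
      · subst hj
        simpa using norm_le_pi_norm x j
      · rw [Function.update_of_ne hj]
        exact (norm_le_pi_norm _ j).trans (norm_Smat_mulVec_le hMnn hMrow hphi x)
    calc |x i| = lam i * |(W *ᵥ Function.update (Smat M phi *ᵥ x) i (x i)) i| := by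
          rw [← abs_of_pos (hlam i).1, ← abs_mul, ← hi]
      _ ≤ lam i * ‖x‖ := mul_le_mul_of_nonneg_left
          ((abs_mulVec_le_norm hWnn hWrow _ i).trans hupd) (hlam i).1.le
  have hconst : (1 - A) *ᵥ (fun _ => β) = (1 - diagonal lam) *ᵥ (fun _ => β) := by
    ext i
    have hupd : Function.update (fun _ : Fin n => β) i β = fun _ => β :=
      Function.update_eq_self i _
    rw [sub_mulVec, sub_mulVec, Pi.sub_apply, Pi.sub_apply, hA,
      P11_add_P12_mul_Smat_mulVec_apply hu, Smat_mulVec_const hMrow hu, hupd,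
      mulVec_const hWrow, mulVec_diagonal]
  rw [hR, ← mulVec_mulVec]
  constructor
  · intro h
    have h' : (1 - diagonal lam) *ᵥ y0 = (1 - diagonal lam) *ᵥ (fun _ => β) := by
      rw [← hconst, ← h, mulVec_mulVec, mul_nonsing_inv _ hAu, one_mulVec]
    ext i
    have hi := congrFun h' i
    simp only [sub_mulVec, one_mulVec, Pi.sub_apply, mulVec_diagonal] at hi
    have hl : 1 - lam i ≠ 0 := (sub_pos.2 (hlam i).2).ne'
    exact mul_left_cancel₀ hl (by linarith)
  · rintro rfl
    rw [← hconst, mulVec_mulVec, nonsing_inv_mul _ hAu, one_mulVec]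
end

section
/- Suppose M = (1/n)·1·1ᵀ (the global-average matrix). Let φ_max = max_i φ_i, φ_min = min_i φ_i, and κ = 1 − (φ_min/φ_max)(1 − φ_max); then κ ∈ (0,1), and for every y(0) ∈ ℝ^n the limiting opinions y* = R y(0) and ŷ* = S y* satisfy (max_i ŷ*_i − min_i ŷ*_i)/κ ≤ max_i y*_i − min_i y*_i. -/
/-!
For `M = (1/n)·1·1ᵀ` the equation `ŷ = S y` reads `ŷ_i = φ_i y_i + (1 - φ_i) m`, where `m` is the
mean of `ŷ`. Summing over `i` gives `m ∑ φ_i = ∑ φ_i y_i`, so `m` is a weighted average of the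
`y_i` and lies between `min y` and `max y`. Hence
`ŷ_i - ŷ_j = φ_i (y_i - m) + φ_j (m - y_j) ≤ φ_max (max y - min y)`, and
`φ_max ≤ κ` because `1 - κ = (φ_min / φ_max) (1 - φ_max) ≤ 1 - φ_max`.
The bound holds for every vector `y`, in particular for `y* = R y(0)`.
-/

open Matrix BigOperators

/-- The global-average matrix `M = (1/n)·1·1ᵀ`. -/
noncomputable def Mavg (n : ℕ) : Matrix (Fin n) (Fin n) ℝ :=
  Matrix.of fun _ _ => (1 : ℝ) / n

lemma one_sub_P22_mulVec {n : ℕ} (phi z : Fin n → ℝ) (i : Fin n) :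
    ((1 - P22 (Mavg n) phi) *ᵥ z) i = z i - (1 - phi i) * ((∑ j, z j) / n) := by
  have hM : (Mavg n *ᵥ z) = fun _ => (∑ j, z j) / n := by
    ext k
    simp only [Mavg, mulVec, dotProduct, of_apply, ← Finset.mul_sum]
    ring
  rw [P22, sub_mulVec, one_mulVec, ← mulVec_mulVec, hM, sub_mulVec, one_mulVec]
  simp only [Pi.sub_apply, mulVec_diagonal]
  ring

/-- If `(1 - P₂₂) z = Φ y`, then the mean of `z` is the `φ`-weighted average of `y`. -/
lemma mean_mul_sum_phi {n : ℕ} (hn : 2 ≤ n) (phi y z : Fin n → ℝ)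
    (h : ∀ i, z i - (1 - phi i) * ((∑ j, z j) / n) = phi i * y i) :
    (∑ j, z j) / n * ∑ i, phi i = ∑ i, phi i * y i := by
  have hn0 : (n : ℝ) ≠ 0 := by positivity
  rw [← Finset.sum_congr rfl fun i _ => h i, Finset.sum_sub_distrib, ← Finset.sum_mul,
    Finset.sum_sub_distrib]
  simp only [Finset.sum_const, Finset.card_univ, Fintype.card_fin, nsmul_eq_mul, mul_one]
  field_simp
  ring

lemma isUnit_one_sub_P22 {n : ℕ} (hn : 2 ≤ n) (phi : Fin n → ℝ) (hphi : ∀ i, 0 < phi i) :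
    IsUnit (1 - P22 (Mavg n) phi) := by
  have : Nonempty (Fin n) := ⟨⟨0, by omega⟩⟩
  rw [← mulVec_injective_iff_isUnit]
  refine (injective_iff_map_eq_zero (1 - P22 (Mavg n) phi).mulVecLin).2 fun z hz => ?_
  have h : ∀ i, z i - (1 - phi i) * ((∑ j, z j) / n) = 0 := fun i => by
    rw [← one_sub_P22_mulVec]
    exact congrFun hz i
  have hs : 0 < ∑ i, phi i := Finset.sum_pos (fun i _ => hphi i) Finset.univ_nonempty
  have hm := mean_mul_sum_phi hn phi 0 z (by simpa using h)
  simp only [Pi.zero_apply, mul_zero, Finset.sum_const_zero, mul_eq_zero, hs.ne', or_false] at hm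
  ext i
  have := h i
  rw [hm] at this
  simpa using this

/-- If all `φ_i ≤ p` and `y` takes values in `[a, b]`, the spread of `S y` is at most `p (b - a)`. -/
lemma Smat_mulVec_sub_le {n : ℕ} (hn : 2 ≤ n) (phi y : Fin n → ℝ) (hphi : ∀ i, 0 < phi i)
    {a b p : ℝ} (ha : ∀ i, a ≤ y i) (hb : ∀ i, y i ≤ b) (hp : ∀ i, phi i ≤ p) (i j : Fin n) :
    (Smat (Mavg n) phi *ᵥ y) i - (Smat (Mavg n) phi *ᵥ y) j ≤ p * (b - a) := by
  have : Nonempty (Fin n) := ⟨i⟩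
  set z := Smat (Mavg n) phi *ᵥ y with hz
  have hdet := (isUnit_iff_isUnit_det _).1 (isUnit_one_sub_P22 hn phi hphi)
  have h : ∀ i, z i - (1 - phi i) * ((∑ j, z j) / n) = phi i * y i := fun i => by
    rw [← one_sub_P22_mulVec, hz, Smat, mulVec_mulVec, mul_nonsing_inv_cancel_left _ _ hdet,
      mulVec_diagonal]
  have hm := mean_mul_sum_phi hn phi y z h
  have hi := h i
  have hj := h j
  generalize (∑ j, z j) / (n : ℝ) = m at hm hi hj
  have hs : 0 < ∑ i, phi i := Finset.sum_pos (fun i _ => hphi i) Finset.univ_nonempty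
  have ham : a ≤ m := by
    refine le_of_mul_le_mul_right ?_ hs
    rw [hm, Finset.mul_sum]
    exact Finset.sum_le_sum fun k _ => by nlinarith [hphi k, ha k]
  have hmb : m ≤ b := by
    refine le_of_mul_le_mul_right ?_ hs
    rw [hm, Finset.mul_sum]
    exact Finset.sum_le_sum fun k _ => by nlinarith [hphi k, hb k]
  have h1 : phi i * (y i - m) ≤ p * (b - m) :=
    (mul_le_mul_of_nonneg_left (by linarith [hb i]) (hphi i).le).trans
      (mul_le_mul_of_nonneg_right (hp i) (by linarith))
  have h2 : phi j * (m - y j) ≤ p * (m - a) :=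
    (mul_le_mul_of_nonneg_left (by linarith [ha j]) (hphi j).le).trans
      (mul_le_mul_of_nonneg_right (hp j) (by linarith))
  linarith



/-- With `M = (1/n)·1·1ᵀ`, writing `φ_max = max_i φ_i`,
`φ_min = min_i φ_i` and `κ = 1 − (φ_min/φ_max)(1 − φ_max)`, one has
`κ ∈ (0,1)` and, for every `y(0)`, the limits `y* = R y(0)`, `ŷ* = S y*`
satisfy `(max ŷ* − min ŷ*)/κ ≤ max y* − min y*`. -/
theorem stmt_11 {n : ℕ} (hn : 2 ≤ n) (W : Matrix (Fin n) (Fin n) ℝ)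
    (hWnn : ∀ i j, 0 ≤ W i j) (hWrow : ∀ i, ∑ j, W i j = 1)
    (hWirr : ∀ i j, i ≠ j → Relation.TransGen (fun a b => 0 < W b a) i j)
    (hWprim : ∃ k : ℕ, 0 < k ∧ ∀ i j, 0 < (W ^ k) i j)
    (lam phi : Fin n → ℝ)
    (hlam : ∀ i, lam i ∈ Set.Ioo (0 : ℝ) 1)
    (hphi : ∀ i, phi i ∈ Set.Ioo (0 : ℝ) 1) :
    (1 - ((⨅ i, phi i) / (⨆ i, phi i)) * (1 - ⨆ i, phi i)) ∈ Set.Ioo (0 : ℝ) 1 ∧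
    ∀ y0 : Fin n → ℝ,
      ((⨆ i, (Smat (Mavg n) phi *ᵥ (Rmat W (Mavg n) lam phi *ᵥ y0)) i) -
          (⨅ i, (Smat (Mavg n) phi *ᵥ (Rmat W (Mavg n) lam phi *ᵥ y0)) i)) /
        (1 - ((⨅ i, phi i) / (⨆ i, phi i)) * (1 - ⨆ i, phi i)) ≤
      (⨆ i, (Rmat W (Mavg n) lam phi *ᵥ y0) i) -
        (⨅ i, (Rmat W (Mavg n) lam phi *ᵥ y0) i) := by
  have : Nonempty (Fin n) := ⟨⟨0, by omega⟩⟩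
  have bdA : ∀ f : Fin n → ℝ, BddAbove (Set.range f) := fun f => (Set.finite_range f).bddAbove
  have bdB : ∀ f : Fin n → ℝ, BddBelow (Set.range f) := fun f => (Set.finite_range f).bddBelow
  obtain ⟨i₀, hi₀⟩ := exists_eq_ciSup_of_finite (f := phi)
  obtain ⟨i₁, hi₁⟩ := exists_eq_ciInf_of_finite (f := phi)
  have hp : ∀ i, phi i ≤ ⨆ i, phi i := le_ciSup (bdA phi)
  have hP0 := hi₀ ▸ (hphi i₀).1
  have hP1 := hi₀ ▸ (hphi i₀).2
  have hq0 := hi₁ ▸ (hphi i₁).1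
  have hqp : ⨅ i, phi i ≤ ⨆ i, phi i := hi₁ ▸ hp i₁
  generalize (⨆ i, phi i) = p at *
  generalize (⨅ i, phi i) = q at *
  have hr0 : 0 < q / p := div_pos hq0 hP0
  have hr1 : q / p ≤ 1 := (div_le_one hP0).2 hqp
  have hpk : p ≤ 1 - q / p * (1 - p) := by nlinarith
  refine ⟨⟨by linarith, by nlinarith⟩, fun y0 => ?_⟩
  generalize Rmat W (Mavg n) lam phi *ᵥ y0 = y
  rw [div_le_iff₀ (by linarith)]
  obtain ⟨i, hi⟩ := exists_eq_ciSup_of_finite (f := Smat (Mavg n) phi *ᵥ y)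
  obtain ⟨j, hj⟩ := exists_eq_ciInf_of_finite (f := Smat (Mavg n) phi *ᵥ y)
  rw [← hi, ← hj]
  have hab : (⨅ i, y i) ≤ ⨆ i, y i := ciInf_le_ciSup (bdB y) (bdA y)
  refine (Smat_mulVec_sub_le hn phi y (fun i => (hphi i).1) (ciInf_le (bdB y))
    (le_ciSup (bdA y)) hp i j).trans ?_
  rw [mul_comm]
  exact mul_le_mul_of_nonneg_left hpk (sub_nonneg.2 hab)
end

section
/- Suppose M = (1/n)·1·1ᵀ. Then the coefficient of ergodicity of S = (I − P_22)^{-1}Φ satisfies τ(S) ≤ κ, where κ = 1 − (φ_min/φ_max)(1 − φ_max), φ_max = max_i φ_i, and φ_min = min_i φ_i. -/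
/-!
Write `u i = 1 - phi i` and `σ = ∑ i, phi i`. Since `P₂₂ = (1/n) u 1ᵀ` has rank one, the
Sherman–Morrison formula gives `(I - P₂₂)⁻¹ = I + (1/σ) u 1ᵀ`, because `n - ∑ u = σ > 0`. Hence
`S i s = δ_{is} phi s + (1 - phi i) phi s / σ ≥ (1 - φ_max) phi s / σ`, and summing over `s` shows
that any two rows of `S` overlap by at least `1 - φ_max`. So `τ(S) ≤ φ_max`, which is at most `κ`
because `φ_min / φ_max ≤ 1`.
-/

open Matrix BigOperators

/-- The coefficient of ergodicity
`τ(A) = 1 − min_{i,j} ∑_s min(A_{is}, A_{js})`. -/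
noncomputable def ergCoeff {n : ℕ} (A : Matrix (Fin n) (Fin n) ℝ) : ℝ :=
  1 - ⨅ p : Fin n × Fin n, ∑ s, min (A p.1 s) (A p.2 s)

/-- Sherman–Morrison for the rank-one perturbation `I - (I - Φ) M`. -/
lemma inv_one_sub_mul_Mavg {n : ℕ} (phi : Fin n → ℝ) (hn : n ≠ 0) (hs : ∑ i, phi i ≠ 0) :
    (1 - (1 - Matrix.diagonal phi) * Mavg n)⁻¹ =
      1 + Matrix.of fun i _ => (1 - phi i) / ∑ k, phi k := by
  have hn' : (n : ℝ) ≠ 0 := by exact_mod_cast hn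
  have hP : (1 - Matrix.diagonal phi) * Mavg n =
      Matrix.of fun i _ => (1 - phi i) / (n : ℝ) := by
    ext i j
    rw [sub_mul, one_mul, Matrix.sub_apply, Matrix.diagonal_mul]
    simp only [Mavg, Matrix.of_apply]
    ring
  apply Matrix.inv_eq_right_inv
  rw [hP, sub_mul, one_mul, mul_add, mul_one, add_sub_assoc, add_eq_left]
  ext i j
  simp only [Matrix.sub_apply, Matrix.add_apply, Matrix.mul_apply, Matrix.of_apply,
    Matrix.zero_apply]
  rw [← Finset.mul_sum, ← Finset.sum_div, Finset.sum_sub_distrib]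
  simp only [Finset.sum_const, Finset.card_univ, Fintype.card_fin, nsmul_eq_mul, mul_one]
  field_simp
  ring

/-- With `M = (1/n)·1·1ᵀ` and `P₂₂ = (I − Φ)M`, the
coefficient of ergodicity of `S = (I − P₂₂)⁻¹Φ` satisfies `τ(S) ≤ κ`, where
`κ = 1 − (φ_min/φ_max)(1 − φ_max)`. -/
theorem stmt_12 {n : ℕ} (hn : 2 ≤ n) (phi : Fin n → ℝ)
    (hphi : ∀ i, phi i ∈ Set.Ioo (0 : ℝ) 1) :
    ergCoeff ((1 - (1 - Matrix.diagonal phi) * Mavg n)⁻¹ * Matrix.diagonal phi) ≤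
      1 - ((⨅ i, phi i) / (⨆ i, phi i)) * (1 - ⨆ i, phi i) := by
  have : NeZero n := ⟨by omega⟩
  have hpos : ∀ i, 0 < phi i := fun i => (hphi i).1
  have hσ : 0 < ∑ k, phi k := Finset.sum_pos (fun i _ => hpos i) Finset.univ_nonempty
  have hmax : ∀ i, phi i ≤ ⨆ i, phi i := le_ciSup (Set.finite_range phi).bddAbove
  have hmin : ∀ i, ⨅ i, phi i ≤ phi i := ciInf_le (Set.finite_range phi).bddBelow
  have hmax1 : ⨆ i, phi i ≤ 1 := ciSup_le fun i => (hphi i).2.le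
  have hmax0 : 0 < ⨆ i, phi i := (hpos 0).trans_le (hmax 0)
  have hratio : (⨅ i, phi i) / (⨆ i, phi i) ≤ 1 :=
    (div_le_one hmax0).2 ((hmin 0).trans (hmax 0))
  have hκ : ((⨅ i, phi i) / (⨆ i, phi i)) * (1 - ⨆ i, phi i) ≤ 1 - ⨆ i, phi i :=
    mul_le_of_le_one_left (by linarith) hratio
  rw [inv_one_sub_mul_Mavg phi (by omega) hσ.ne']
  unfold ergCoeff
  refine sub_le_sub_left (hκ.trans (le_ciInf fun p => ?_)) 1
  have hentry : ∀ i s, (1 - ⨆ i, phi i) * (phi s / ∑ k, phi k) ≤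
      ((1 + Matrix.of fun i _ => (1 - phi i) / ∑ k, phi k) * Matrix.diagonal phi :
        Matrix (Fin n) (Fin n) ℝ) i s := by
    intro i s
    rw [Matrix.mul_diagonal, Matrix.add_apply, Matrix.of_apply, add_mul, div_mul_eq_mul_div,
      ← mul_div_assoc]
    have h1 : 0 ≤ (1 : Matrix (Fin n) (Fin n) ℝ) i s * phi s := by
      refine mul_nonneg ?_ (hpos s).le
      rw [Matrix.one_apply]
      split_ifs <;> norm_num
    have h2 : (1 - ⨆ i, phi i) * phi s / ∑ k, phi k ≤ (1 - phi i) * phi s / ∑ k, phi k := by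
      have := hmax i
      have := (hpos s).le
      gcongr
    linarith
  calc 1 - ⨆ i, phi i = ∑ s, (1 - ⨆ i, phi i) * (phi s / ∑ k, phi k) := by
        rw [← Finset.mul_sum, ← Finset.sum_div, div_self hσ.ne', mul_one]
    _ ≤ _ := Finset.sum_le_sum fun s _ => le_min (hentry p.1 s) (hentry p.2 s)
end
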